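/- arXiv:2604.14087 — 3 statements merged into one kernel-verified Lean document; each statement's English description precedes it below -/
import Mathlib

section
/- Let B be the open unit ball in ℝ³ and let a = (a^{ij}) : B → (real symmetric 3×3 matrices) be a C² map with a(0) = I and with all first-order partial derivatives of a vanishing at 0. Let f(x) = Σ_{i,j} ∂_i ( a^{ij}(x) ∂_j (|x|^{-1}) ) for x ∈ B ∖ {0}. Then for every φ ∈ C_c^∞(B) both integrals below converge absolutely and ∫_B Σ_{i,j} a^{ij}(x) ∂_i φ(x) ∂_j (|x|^{-1}) dx = 4π φ(0) − ∫_B φ(x) f(x) dx. -/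
open MeasureTheory Metric Set
open scoped BigOperators

noncomputable section

/-- Euclidean 3-space. -/
abbrev E3 := EuclideanSpace ℝ (Fin 3)

/-!
Write `d` for the dimension and `K` for the radial field `x / ‖x‖ ^ d`, so that `∇ ‖x‖ ^ (2 - d)`
is `(2 - d) K`. The vector field `F = φ a K` is compactly supported and `C¹` away from the origin,
and its divergence is the sum of the two integrands of the identity, up to the factor `2 - d`.

Two properties of `K` do all the work. First, `div K = 0` off the origin; since `φ a` equals
`φ 0 • 1` up to `O(‖x‖)`, this makes `div F = O(‖x‖ ^ (1 - d))`, which is integrable. Second, in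
polar coordinates `∫ ∇ψ · K` is the integral over the unit sphere of the integrals of the radial
derivative of `ψ` along rays, so it is `-ψ 0` times the area of the sphere.

To compute `∫ div F`, multiply by `1 - ψ (x / r)`, where `ψ` is a bump equal to `1` near `0`, and
integrate by parts: `∫ (1 - ψ_r) div F = ∫ ∇ψ_r · F`. As `r → 0`, dominated convergence handles the
left side. On the right side `F = φ 0 • K + o(‖x‖ ^ (1 - d))`, the main term has just been computed,
and the remainder tends to `0` because `∫ |∇ψ_r| ‖x‖ ^ (1 - d)` does not depend on `r`.
-/

open Filter Topology Module Asymptotics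

section PolarCoordinates

theorem integral_volumeIoiPow {F : Type*} [NormedAddCommGroup F] [NormedSpace ℝ F] (k : ℕ)
    (g : ℝ → F) :
    ∫ r : Ioi (0 : ℝ), g r ∂Measure.volumeIoiPow k = ∫ r in Ioi (0 : ℝ), r ^ k • g r := by
  simp only [Measure.volumeIoiPow, ENNReal.ofReal]
  rw [integral_withDensity_eq_integral_smul (measurable_subtype_coe.pow_const _).real_toNNReal,
    integral_subtype_comap measurableSet_Ioi fun r => Real.toNNReal (r ^ k) • g r]
  refine setIntegral_congr_fun measurableSet_Ioi fun r (hr : 0 < r) => ?_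
  simp only [NNReal.smul_def, Real.coe_toNNReal _ (pow_nonneg hr.le _)]

variable {E : Type*} [NormedAddCommGroup E] [NormedSpace ℝ E] {ψ : E → ℝ}

theorem integral_Ioi_fderiv_smul_apply (hψ : ContDiff ℝ 1 ψ) (hψc : HasCompactSupport ψ)
    {v : E} (hv : v ≠ 0) : ∫ r in Ioi (0 : ℝ), fderiv ℝ ψ (r • v) v = -ψ 0 := by
  have hasDerivAt_ray (r : ℝ) : HasDerivAt (fun r : ℝ => ψ (r • v)) (fderiv ℝ ψ (r • v) v) r :=
    (hψ.differentiable one_ne_zero _).hasFDerivAt.comp_hasDerivAt r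
      (by simpa using (hasDerivAt_id r).smul_const v)
  calc ∫ r in Ioi (0 : ℝ), fderiv ℝ ψ (r • v) v
    _ = ∫ r in Ioi (0 : ℝ), deriv (fun r : ℝ => ψ (r • v)) r := by
        simp only [(hasDerivAt_ray _).deriv]
    _ = -ψ ((0 : ℝ) • v) := HasCompactSupport.integral_Ioi_deriv_eq (by fun_prop)
        (hψc.comp_isClosedEmbedding (isClosedEmbedding_smul_left hv)) 0
    _ = -ψ 0 := by rw [zero_smul]

theorem continuousOn_norm_zpow {E : Type*} [NormedAddCommGroup E] (m : ℤ) :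
    ContinuousOn (fun x : E => ‖x‖ ^ m) {0}ᶜ :=
  continuous_norm.continuousOn.zpow₀ m fun _ hx => .inl (norm_ne_zero_iff.2 hx)

variable [FiniteDimensional ℝ E] [Nontrivial E] [MeasurableSpace E] [BorelSpace E]
  (μ : Measure E) [μ.IsAddHaarMeasure]

theorem integral_eq_integral_sphere_integral_Ioi {F : Type*} [NormedAddCommGroup F]
    [NormedSpace ℝ F] {f : E → F} (hf : Integrable f μ) :
    ∫ x, f x ∂μ =
      ∫ ω : sphere (0 : E) 1, (∫ r in Ioi (0 : ℝ), r ^ (finrank ℝ E - 1) • f (r • (ω : E)))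
        ∂μ.toSphere := by
  let polar := (homeomorphUnitSphereProd E).symm
  have polar_preserving : MeasurePreserving polar
      (μ.toSphere.prod (Measure.volumeIoiPow (finrank ℝ E - 1))) (μ.comap (↑)) :=
    μ.measurePreserving_homeomorphUnitSphereProd.symm
      (homeomorphUnitSphereProd E).toMeasurableEquiv
  have polar_emb : MeasurableEmbedding polar := Homeomorph.measurableEmbedding _
  have hf_polar : Integrable (fun p => f (polar p))
      (μ.toSphere.prod (Measure.volumeIoiPow (finrank ℝ E - 1))) := by
    refine (polar_preserving.integrable_comp_emb polar_emb (g := fun x => f x)).2 ?_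
    exact (integrableOn_iff_comap_subtypeVal (measurableSet_singleton 0).compl).1 hf.integrableOn
  calc ∫ x, f x ∂μ
    _ = ∫ x : ({0}ᶜ : Set E), f x ∂μ.comap (↑) := by
        rw [integral_subtype_comap (measurableSet_singleton _).compl f, restrict_compl_singleton]
    _ = ∫ p, f (polar p) ∂μ.toSphere.prod (Measure.volumeIoiPow (finrank ℝ E - 1)) :=
        (polar_preserving.integral_comp polar_emb fun x => f x).symm
    _ = ∫ ω, ∫ r, f (polar (ω, r)) ∂Measure.volumeIoiPow (finrank ℝ E - 1) ∂μ.toSphere :=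
        integral_prod _ hf_polar
    _ = _ := integral_congr_ae <| .of_forall fun ω =>
        integral_volumeIoiPow _ fun r => f (r • (ω : E))

theorem integrableOn_ball_norm_zpow_one_sub_finrank (R : ℝ) :
    IntegrableOn (fun x : E => ‖x‖ ^ (1 - finrank ℝ E : ℤ)) (ball 0 R) μ := by
  rw [integrableOn_fun_norm_addHaar μ (f := fun r => r ^ (1 - finrank ℝ E : ℤ))]
  have integrableOn_one : IntegrableOn (fun _ : ℝ => (1 : ℝ)) (Ioo 0 R) := by simp
  refine integrableOn_one.congr_fun (fun r hr => ?_) measurableSet_Ioo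
  have hdim : 1 ≤ finrank ℝ E := finrank_pos
  rw [smul_eq_mul, ← zpow_natCast, ← zpow_add₀ hr.1.ne', Nat.cast_sub hdim]
  simp

variable {μ} in
theorem integrable_of_hasCompactSupport_of_norm_le_zpow {f : E → ℝ} {C : ℝ}
    (hf : ContinuousOn f {0}ᶜ) (hfc : HasCompactSupport f)
    (hbound : ∀ x ≠ 0, ‖f x‖ ≤ C * ‖x‖ ^ (1 - finrank ℝ E : ℤ)) : Integrable f μ := by
  obtain ⟨R, hR⟩ := hfc.isBounded.subset_ball 0
  have f_measurable : AEStronglyMeasurable f μ := by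
    rw [← restrict_compl_singleton (μ := μ) 0]
    exact hf.aestronglyMeasurable (measurableSet_singleton 0).compl
  refine (integrableOn_iff_integrable_of_support_subset ((subset_tsupport f).trans hR)).1 ?_
  refine ((integrableOn_ball_norm_zpow_one_sub_finrank μ R).const_mul C).mono'
    f_measurable.restrict ?_
  filter_upwards [ae_restrict_of_ae (compl_mem_ae_iff.2 (measure_singleton 0))] with x hx
    using hbound x hx

theorem integrable_fderiv_apply_self_mul_zpow (hψ : ContDiff ℝ 1 ψ) (hψc : HasCompactSupport ψ) :
    Integrable (fun x => fderiv ℝ ψ x x * ‖x‖ ^ (-finrank ℝ E : ℤ)) μ := by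
  have hψ' : Continuous (fderiv ℝ ψ) := hψ.continuous_fderiv one_ne_zero
  obtain ⟨C, hC⟩ := (hψc.fderiv ℝ).exists_bound_of_continuous hψ'
  refine integrable_of_hasCompactSupport_of_norm_le_zpow (C := C) ?_ ?_ fun x hx => ?_
  · exact (hψ'.clm_apply continuous_id).continuousOn.mul <|
      continuousOn_norm_zpow _
  · exact (hψc.fderiv ℝ).mono fun x hx hx' => hx (by simp [hx'])
  · have hx' : ‖x‖ ≠ 0 := norm_ne_zero_iff.2 hx
    calc ‖fderiv ℝ ψ x x * ‖x‖ ^ (-finrank ℝ E : ℤ)‖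
      _ ≤ C * ‖x‖ * ‖x‖ ^ (-finrank ℝ E : ℤ) := by
        rw [norm_mul, norm_zpow, norm_norm]
        gcongr
        exact (fderiv ℝ ψ x).le_of_opNorm_le (hC x) x
      _ = C * ‖x‖ ^ (1 - finrank ℝ E : ℤ) := by
        rw [sub_eq_add_neg, zpow_add₀ hx', zpow_one, mul_assoc]

theorem integral_fderiv_apply_self_mul_zpow (hψ : ContDiff ℝ 1 ψ) (hψc : HasCompactSupport ψ) :
    ∫ x, fderiv ℝ ψ x x * ‖x‖ ^ (-finrank ℝ E : ℤ) ∂μ =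
      -(finrank ℝ E * μ.real (ball 0 1) * ψ 0) := by
  have ray_integral (ω : sphere (0 : E) 1) :
      ∫ r in Ioi (0 : ℝ), r ^ (finrank ℝ E - 1) •
        (fderiv ℝ ψ (r • (ω : E)) (r • (ω : E)) * ‖r • (ω : E)‖ ^ (-finrank ℝ E : ℤ)) = -ψ 0 := by
    rw [← integral_Ioi_fderiv_smul_apply hψ hψc (ne_zero_of_mem_unit_sphere ω)]
    refine setIntegral_congr_fun measurableSet_Ioi fun r (hr : 0 < r) => ?_
    have hdim : finrank ℝ E ≠ 0 := finrank_pos.ne'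
    simp only [map_smul, norm_smul, norm_eq_of_mem_sphere, mul_one, Real.norm_of_nonneg hr.le,
      smul_eq_mul, zpow_neg, zpow_natCast]
    field_simp
    rw [pow_sub_one_mul hdim, mul_comm]
  rw [integral_eq_integral_sphere_integral_Ioi μ (integrable_fderiv_apply_self_mul_zpow μ hψ hψc)]
  rw [integral_congr_ae (.of_forall ray_integral), integral_const,
    Measure.toSphere_real_apply_univ, smul_eq_mul, mul_neg]

end PolarCoordinates

section Cutoff

theorem continuous_mul_of_tsupport_subset {X : Type*} [TopologicalSpace X] {U : Set X}
    (hU : IsOpen U) {η g : X → ℝ} (hη : Continuous η) (hηU : tsupport η ⊆ U)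
    (hg : ContinuousOn g U) : Continuous fun x => η x * g x :=
  continuous_of_tsupport fun _ hx => hη.continuousAt.mul <|
    hg.continuousAt (hU.mem_nhds (hηU (tsupport_mul_subset_left hx)))

theorem hasCompactSupport_finsetSum {X M κ : Type*} [TopologicalSpace X] [AddCommMonoid M]
    (s : Finset κ) {f : κ → X → M} (hf : ∀ k ∈ s, HasCompactSupport (f k)) :
    HasCompactSupport fun x => ∑ k ∈ s, f k x := by
  rw [← Finset.sum_fn]
  exact Finset.sum_induction f HasCompactSupport (fun _ _ => .add) .zero hf

variable {E : Type*} [NormedAddCommGroup E] [NormedSpace ℝ E] {U : Set E} {η g : E → ℝ}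

theorem fderiv_mul_apply {x : E} (hη : DifferentiableAt ℝ η x) (hg : DifferentiableAt ℝ g x)
    (v : E) :
    fderiv ℝ (fun y => η y * g y) x v = fderiv ℝ η x v * g x + η x * fderiv ℝ g x v := by
  rw [fderiv_fun_mul hη hg]
  simp only [add_apply, _root_.smul_apply, smul_eq_mul]
  ring

theorem contDiff_mul_of_tsupport_subset {n : WithTop ℕ∞} (hU : IsOpen U) (hη : ContDiff ℝ n η)
    (hηU : tsupport η ⊆ U) (hg : ContDiffOn ℝ n g U) : ContDiff ℝ n fun x => η x * g x := by
  refine contDiff_iff_contDiffAt.2 fun x => ?_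
  by_cases hx : x ∈ tsupport η
  · exact hη.contDiffAt.mul (hg.contDiffAt (hU.mem_nhds (hηU hx)))
  · refine (contDiffAt_const (c := 0)).congr_of_eventuallyEq ?_
    filter_upwards [notMem_tsupport_iff_eventuallyEq.1 hx] with y hy
    simp [hy]

theorem tsupport_one_sub_subset_compl_singleton {X : Type*} [TopologicalSpace X] {ψ : X → ℝ}
    {x₀ : X} (hψ1 : ψ =ᶠ[𝓝 x₀] 1) : tsupport (fun x => 1 - ψ x) ⊆ {x₀}ᶜ := by
  rw [subset_compl_singleton_iff, notMem_tsupport_iff_eventuallyEq]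
  filter_upwards [hψ1] with x hx
  simp [hx]

theorem integrable_fderiv_apply_mul_of_eventuallyEq_one [MeasurableSpace E] [BorelSpace E]
    {μ : Measure E} [IsFiniteMeasureOnCompacts μ] (hη : ContDiff ℝ 1 η)
    (hηc : HasCompactSupport η) (hη1 : η =ᶠ[𝓝 0] 1) (hg : ContinuousOn g {0}ᶜ) (v : E) :
    Integrable (fun x => fderiv ℝ η x v * g x) μ := by
  have hη' : Continuous fun x => fderiv ℝ η x v :=
    (hη.continuous_fderiv one_ne_zero).clm_apply continuous_const
  have hη0 : tsupport (fun x => fderiv ℝ η x v) ⊆ {0}ᶜ := by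
    rw [subset_compl_singleton_iff, notMem_tsupport_iff_eventuallyEq]
    filter_upwards [hη1.fderiv (𝕜 := ℝ)] with x hx
    simp [hx, Pi.one_def]
  exact (continuous_mul_of_tsupport_subset isOpen_compl_singleton hη' hη0
    hg).integrable_of_hasCompactSupport (hηc.fderiv_apply ℝ v).mul_right

variable [FiniteDimensional ℝ E] [MeasurableSpace E] [BorelSpace E] {μ : Measure E}
  [μ.IsAddHaarMeasure]

theorem integral_mul_fderiv_eq_neg_of_tsupport_subset (hU : IsOpen U) (hη : ContDiff ℝ 1 η)
    (hηU : tsupport η ⊆ U) (hg : ContDiffOn ℝ 1 g U) (hgc : HasCompactSupport g) (v : E) :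
    ∫ x, η x * fderiv ℝ g x v ∂μ = -∫ x, fderiv ℝ η x v * g x ∂μ := by
  have hη' : Continuous fun x => fderiv ℝ η x v :=
    (hη.continuous_fderiv one_ne_zero).clm_apply continuous_const
  have hg' : ContinuousOn (fun x => fderiv ℝ g x v) U :=
    (hg.continuousOn_fderiv_of_isOpen hU le_rfl).clm_apply continuousOn_const
  have mul_integrable {η₁ g₁ : E → ℝ} (hη₁ : Continuous η₁) (hη₁U : tsupport η₁ ⊆ U)
      (hg₁ : ContinuousOn g₁ U) (hg₁c : HasCompactSupport g₁) :
      Integrable (fun x => η₁ x * g₁ x) μ :=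
    (continuous_mul_of_tsupport_subset hU hη₁ hη₁U hg₁).integrable_of_hasCompactSupport
      hg₁c.mul_left
  exact integral_mul_fderiv_eq_neg_fderiv_mul_of_integrable
    (mul_integrable hη' ((tsupport_fderiv_apply_subset ℝ v).trans hηU) hg.continuousOn hgc)
    (mul_integrable hη.continuous hηU hg' (hgc.fderiv_apply ℝ v))
    (mul_integrable hη.continuous hηU hg.continuousOn hgc)
    (fun x _ => hη.differentiable one_ne_zero x)
    fun x hx => (hg.differentiableOn one_ne_zero).differentiableAt (hU.mem_nhds (hηU hx))

end Cutoff

section Dilation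

variable {E : Type*} [NormedAddCommGroup E] [NormedSpace ℝ E] {ψ : E → ℝ}

theorem eventuallyEq_one_comp_inv_smul (hψ1 : ψ =ᶠ[𝓝 0] 1) (r : ℝ) :
    (fun x => ψ (r⁻¹ • x)) =ᶠ[𝓝 0] 1 := by
  have smul_tendsto : Tendsto (fun x : E => r⁻¹ • x) (𝓝 0) (𝓝 0) :=
    (continuous_const_smul r⁻¹).tendsto' 0 0 (smul_zero _)
  exact smul_tendsto.eventually hψ1

theorem eventually_comp_inv_smul_eq_zero (hψc : HasCompactSupport ψ) {x : E} (hx : x ≠ 0) :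
    ∀ᶠ r : ℝ in 𝓝[>] 0, ψ (r⁻¹ • x) = 0 := by
  obtain ⟨R, hR⟩ := hψc.isBounded.subset_ball 0
  have norm_tendsto : Tendsto (fun r : ℝ => r⁻¹ * ‖x‖) (𝓝[>] 0) atTop :=
    tendsto_inv_nhdsGT_zero.atTop_mul_const (norm_pos_iff.2 hx)
  filter_upwards [norm_tendsto.eventually_ge_atTop R, self_mem_nhdsWithin] with r hr hr0
  refine image_eq_zero_of_notMem_tsupport fun hmem => hr.not_gt ?_
  simpa [norm_smul, abs_of_pos (show 0 < r from hr0)] using hR hmem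

theorem eventually_tsupport_comp_inv_smul_subset (hψc : HasCompactSupport ψ) {s : Set E}
    (hs : s ∈ 𝓝 0) : ∀ᶠ r : ℝ in 𝓝[>] 0, tsupport (fun x => ψ (r⁻¹ • x)) ⊆ s := by
  obtain ⟨R, hR0, hR⟩ := hψc.isBounded.subset_ball_lt 0 0
  obtain ⟨ρ, hρ0, hρ⟩ := Metric.mem_nhds_iff.1 hs
  filter_upwards [Ioo_mem_nhdsGT (div_pos hρ0 hR0)] with r ⟨hr0, hr⟩ x hx
  have hxR : r⁻¹ * ‖x‖ < R := by
    simpa [norm_smul, abs_of_pos hr0] using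
      hR (tsupport_comp_subset_preimage ψ (continuous_const_smul r⁻¹) hx)
  refine hρ (mem_ball_zero_iff.2 ?_)
  calc ‖x‖ < r * R := (inv_mul_lt_iff₀ hr0).1 hxR
    _ < ρ := (lt_div_iff₀ hR0).1 hr

theorem tendsto_integral_one_sub_comp_inv_smul_mul [MeasurableSpace E] [BorelSpace E]
    [SecondCountableTopology E] {μ : Measure E} [NullSingletonClass μ] {h : E → ℝ}
    (hψ : Continuous ψ) (hψc : HasCompactSupport ψ) (hh : Integrable h μ) :
    Tendsto (fun r : ℝ => ∫ x, (1 - ψ (r⁻¹ • x)) * h x ∂μ) (𝓝[>] 0) (𝓝 (∫ x, h x ∂μ)) := by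
  obtain ⟨C, hC⟩ := hψc.exists_bound_of_continuous hψ
  refine tendsto_integral_filter_of_dominated_convergence (fun x => (1 + C) * ‖h x‖)
    (.of_forall fun r => ?_) (.of_forall fun r => .of_forall fun x => ?_)
    (hh.norm.const_mul _) ?_
  · exact (by fun_prop : Continuous fun x => 1 - ψ (r⁻¹ • x)).aestronglyMeasurable.mul
      hh.aestronglyMeasurable
  · rw [norm_mul]
    gcongr
    exact (norm_sub_le _ _).trans (by simpa using hC _)
  · filter_upwards [compl_mem_ae_iff.2 (measure_singleton 0)] with x hx
    refine tendsto_const_nhds.congr' ?_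
    filter_upwards [eventually_comp_inv_smul_eq_zero hψc hx] with r hr
    simp [hr]

theorem hasCompactSupport_comp_inv_smul (hψc : HasCompactSupport ψ) {r : ℝ} (hr : 0 < r) :
    HasCompactSupport fun x => ψ (r⁻¹ • x) :=
  hψc.comp_homeomorph (Homeomorph.smulOfNeZero r⁻¹ (inv_ne_zero hr.ne'))

variable [FiniteDimensional ℝ E] [MeasurableSpace E] [BorelSpace E] (μ : Measure E)
  [μ.IsAddHaarMeasure]

theorem integral_norm_fderiv_comp_inv_smul_mul_zpow (ψ : E → ℝ) {r : ℝ} (hr : 0 < r) (v : E) :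
    ∫ x, ‖fderiv ℝ (fun y => ψ (r⁻¹ • y)) x v‖ * ‖x‖ ^ (1 - finrank ℝ E : ℤ) ∂μ =
      ∫ x, ‖fderiv ℝ ψ x v‖ * ‖x‖ ^ (1 - finrank ℝ E : ℤ) ∂μ := by
  have integrand_eq (x : E) :
      ‖fderiv ℝ (fun y => ψ (r⁻¹ • y)) x v‖ * ‖x‖ ^ (1 - finrank ℝ E : ℤ) =
        (r ^ finrank ℝ E)⁻¹ *
          (‖fderiv ℝ ψ (r⁻¹ • x) v‖ * ‖r⁻¹ • x‖ ^ (1 - finrank ℝ E : ℤ)) := by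
    rw [fderiv_comp_smul]
    simp only [_root_.smul_apply, norm_smul, norm_inv, Real.norm_of_nonneg hr.le, mul_zpow,
      inv_zpow', neg_sub, zpow_sub₀ hr.ne', zpow_natCast, zpow_one]
    field_simp
  simp only [integrand_eq]
  rw [integral_const_mul, Measure.integral_comp_inv_smul_of_nonneg μ
      (fun y => ‖fderiv ℝ ψ y v‖ * ‖y‖ ^ (1 - finrank ℝ E : ℤ)) hr.le, smul_eq_mul,
    inv_mul_cancel_left₀ (by positivity)]

variable [Nontrivial E]

theorem integrable_mul_of_norm_le_zpow {η K : E → ℝ} (hη : Continuous η)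
    (hηc : HasCompactSupport η) (hK : ContinuousOn K {0}ᶜ)
    (hKbound : ∀ x ≠ 0, ‖K x‖ ≤ ‖x‖ ^ (1 - finrank ℝ E : ℤ)) :
    Integrable (fun x => η x * K x) μ := by
  obtain ⟨C, hC⟩ := hηc.exists_bound_of_continuous hη
  refine integrable_of_hasCompactSupport_of_norm_le_zpow (C := C)
    (hη.continuousOn.mul hK) hηc.mul_right fun x hx => ?_
  rw [norm_mul]
  exact mul_le_mul (hC x) (hKbound x hx) (norm_nonneg _) ((norm_nonneg _).trans (hC x))

theorem tendsto_integral_fderiv_comp_inv_smul_mul_of_isLittleO {g : E → ℝ} (hψ : ContDiff ℝ 1 ψ)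
    (hψc : HasCompactSupport ψ)
    (hg : g =o[𝓝[≠] 0] fun x => ‖x‖ ^ (1 - finrank ℝ E : ℤ)) (v : E) :
    Tendsto (fun r : ℝ => ∫ x, fderiv ℝ (fun y => ψ (r⁻¹ • y)) x v * g x ∂μ) (𝓝[>] 0) (𝓝 0) := by
  let mass : ℝ := ∫ x, ‖fderiv ℝ ψ x v‖ * ‖x‖ ^ (1 - finrank ℝ E : ℤ) ∂μ
  suffices h : (fun r : ℝ => ∫ x, fderiv ℝ (fun y => ψ (r⁻¹ • y)) x v * g x ∂μ)
      =o[𝓝[>] 0] fun _ => mass from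
    (isLittleO_one_iff ℝ).1 (h.trans_isBigO (isBigO_const_const _ one_ne_zero _))
  refine IsLittleO.of_bound fun δ hδ => ?_
  have hg_near : ∀ᶠ x in 𝓝 (0 : E), x ≠ 0 → ‖g x‖ ≤ δ * ‖x‖ ^ (1 - finrank ℝ E : ℤ) := by
    simpa using eventually_nhdsWithin_iff.1 (hg.def hδ)
  filter_upwards [eventually_tsupport_comp_inv_smul_subset hψc hg_near, self_mem_nhdsWithin]
    with r hsub (hr : 0 < r)
  let ψr : E → ℝ := fun y => ψ (r⁻¹ • y)
  have hψr : ContDiff ℝ 1 ψr := by fun_prop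
  have hψr' : Continuous fun x => fderiv ℝ ψr x v :=
    (hψr.continuous_fderiv one_ne_zero).clm_apply continuous_const
  have hψrc : HasCompactSupport fun x => fderiv ℝ ψr x v :=
    (hasCompactSupport_comp_inv_smul hψc hr).fderiv_apply ℝ v
  have integrand_le : ∀ᵐ x ∂μ, ‖fderiv ℝ ψr x v * g x‖ ≤
      δ * (‖fderiv ℝ ψr x v‖ * ‖x‖ ^ (1 - finrank ℝ E : ℤ)) := by
    filter_upwards [compl_mem_ae_iff.2 (measure_singleton 0)] with x hx
    by_cases hxs : x ∈ tsupport ψr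
    · rw [norm_mul, mul_left_comm]
      gcongr
      exact hsub hxs hx
    · simp [fderiv_of_notMem_tsupport ℝ hxs]
  have hbound : Integrable
      (fun x => ‖fderiv ℝ ψr x v‖ * ‖x‖ ^ (1 - finrank ℝ E : ℤ)) μ :=
    integrable_mul_of_norm_le_zpow μ hψr'.norm hψrc.norm
      (continuousOn_norm_zpow _) fun x _ => by simp
  calc ‖∫ x, fderiv ℝ ψr x v * g x ∂μ‖
    _ ≤ ∫ x, δ * (‖fderiv ℝ ψr x v‖ * ‖x‖ ^ (1 - finrank ℝ E : ℤ)) ∂μ :=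
        norm_integral_le_of_norm_le (hbound.const_mul δ) integrand_le
    _ = δ * mass := by
        rw [integral_const_mul, integral_norm_fderiv_comp_inv_smul_mul_zpow μ ψ hr v]
    _ ≤ δ * ‖mass‖ := by gcongr; exact le_abs_self _

end Dilation

section RadialField

theorem hasFDerivAt_norm_zpow {E : Type*} [NormedAddCommGroup E] [InnerProductSpace ℝ E] (m : ℤ)
    {x : E} (hx : x ≠ 0) :
    HasFDerivAt (fun y : E => ‖y‖ ^ m) ((m * ‖x‖ ^ (m - 2)) • innerSL ℝ x) x := by
  have hx' : ‖x‖ ≠ 0 := norm_ne_zero_iff.2 hx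
  have norm_deriv : HasFDerivAt (fun y : E => ‖y‖) (‖x‖⁻¹ • innerSL ℝ x) x := by
    have sqrt_deriv := (hasStrictFDerivAt_norm_sq x).hasFDerivAt.sqrt (pow_ne_zero 2 hx')
    simp only [Real.sqrt_sq (norm_nonneg _)] at sqrt_deriv
    refine sqrt_deriv.congr_fderiv ?_
    rw [← Nat.cast_smul_eq_nsmul ℝ, smul_smul]
    congr 1
    field_simp
    norm_num
  refine ((hasDerivAt_zpow m ‖x‖ (.inl hx')).comp_hasFDerivAt x norm_deriv).congr_fderiv ?_
  rw [smul_smul, mul_assoc, ← zpow_sub_one₀ hx', sub_sub, one_add_one_eq_two]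

theorem contDiffOn_norm_zpow {E : Type*} [NormedAddCommGroup E] [InnerProductSpace ℝ E] (m : ℤ)
    {n : WithTop ℕ∞} : ContDiffOn ℝ n (fun x : E => ‖x‖ ^ m) {0}ᶜ := by
  have norm_contDiffOn : ContDiffOn ℝ n (fun x : E => ‖x‖) {0}ᶜ :=
    fun x hx => (contDiffAt_norm ℝ hx).contDiffWithinAt
  obtain ⟨k, rfl | rfl⟩ := m.eq_nat_or_neg
  · simpa only [zpow_natCast] using norm_contDiffOn.pow k
  · simp only [zpow_neg, zpow_natCast]
    exact (norm_contDiffOn.pow k).inv fun x hx => pow_ne_zero k (norm_ne_zero_iff.2 hx)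

variable {ι : Type*} [Fintype ι]

/-- The components `x i / ‖x‖ ^ d` of the radial field, `d` being the dimension. Up to a constant
factor it is the gradient of the fundamental solution of the Laplacian; it restricts to the outer
unit normal on the unit sphere. -/
def radialField (i : ι) (x : EuclideanSpace ℝ ι) : ℝ := x i * ‖x‖ ^ (-Fintype.card ι : ℤ)

theorem contDiffOn_radialField (i : ι) {n : WithTop ℕ∞} :
    ContDiffOn ℝ n (radialField i) {0}ᶜ :=
  (by fun_prop : ContDiff ℝ n fun x : EuclideanSpace ℝ ι => x i).contDiffOn.mul
    (contDiffOn_norm_zpow _)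

theorem continuousOn_radialField (i : ι) : ContinuousOn (radialField i) {0}ᶜ :=
  (contDiffOn_radialField i (n := 0)).continuousOn

theorem differentiableAt_radialField (i : ι) {x : EuclideanSpace ℝ ι} (hx : x ≠ 0) :
    DifferentiableAt ℝ (radialField i) x :=
  ((contDiffOn_radialField i).differentiableOn one_ne_zero).differentiableAt
    (isOpen_compl_singleton.mem_nhds hx)

theorem continuousOn_fderiv_radialField_apply (i : ι) (v : EuclideanSpace ℝ ι) :
    ContinuousOn (fun x => fderiv ℝ (radialField i) x v) {0}ᶜ :=
  ((contDiffOn_radialField i (n := 1)).continuousOn_fderiv_of_isOpen isOpen_compl_singleton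
    le_rfl).clm_apply continuousOn_const

theorem norm_radialField_le (i : ι) {x : EuclideanSpace ℝ ι} (hx : x ≠ 0) :
    ‖radialField i x‖ ≤ ‖x‖ ^ (1 - finrank ℝ (EuclideanSpace ℝ ι) : ℤ) := by
  rw [radialField, norm_mul, norm_zpow, norm_norm, finrank_euclideanSpace, sub_eq_add_neg,
    zpow_add₀ (norm_ne_zero_iff.2 hx), zpow_one]
  gcongr
  exact PiLp.norm_apply_le x i

theorem integrable_mul_radialField [Nonempty ι] {η : EuclideanSpace ℝ ι → ℝ} (hη : Continuous η)
    (hηc : HasCompactSupport η) (i : ι) : Integrable fun x => η x * radialField i x :=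
  integrable_mul_of_norm_le_zpow volume hη hηc (continuousOn_radialField i)
    fun _ hx => norm_radialField_le i hx

theorem fderiv_radialField_apply (i : ι) {x : EuclideanSpace ℝ ι} (hx : x ≠ 0)
    (v : EuclideanSpace ℝ ι) :
    fderiv ℝ (radialField i) x v =
      (v i - Fintype.card ι * x i * inner ℝ x v * ‖x‖ ^ (-2 : ℤ)) *
        ‖x‖ ^ (-Fintype.card ι : ℤ) := by
  let coord : EuclideanSpace ℝ ι →L[ℝ] ℝ := EuclideanSpace.proj i
  have field_deriv : HasFDerivAt (radialField i) _ x :=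
    coord.hasFDerivAt.mul (hasFDerivAt_norm_zpow (-Fintype.card ι : ℤ) hx)
  rw [field_deriv.fderiv]
  simp only [add_apply, _root_.smul_apply, smul_eq_mul, innerSL_apply_apply,
    coord, PiLp.proj_apply, sub_eq_add_neg _ (2 : ℤ), zpow_add₀ (norm_ne_zero_iff.2 hx)]
  push_cast
  ring

theorem norm_fderiv_radialField_apply_le (i : ι) {x : EuclideanSpace ℝ ι} (hx : x ≠ 0)
    (v : EuclideanSpace ℝ ι) :
    ‖fderiv ℝ (radialField i) x v‖ ≤
      (1 + Fintype.card ι) * ‖v‖ * ‖x‖ ^ (-Fintype.card ι : ℤ) := by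
  have hx' : ‖x‖ ≠ 0 := norm_ne_zero_iff.2 hx
  have quadratic_le : ‖x i * inner ℝ x v‖ ≤ ‖x‖ ^ 2 * ‖v‖ := by
    rw [norm_mul, sq, mul_assoc]
    gcongr
    · exact PiLp.norm_apply_le x i
    · exact norm_inner_le_norm x v
  rw [fderiv_radialField_apply i hx, norm_mul, norm_zpow, norm_norm]
  gcongr
  rw [one_add_mul]
  refine (norm_sub_le _ _).trans (add_le_add (PiLp.norm_apply_le v i) ?_)
  calc ‖Fintype.card ι * x i * inner ℝ x v * ‖x‖ ^ (-2 : ℤ)‖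
    _ = Fintype.card ι * (‖x i * inner ℝ x v‖ * ‖x‖ ^ (-2 : ℤ)) := by
        simp only [norm_mul, norm_zpow, norm_norm, RCLike.norm_natCast, mul_assoc]
    _ ≤ Fintype.card ι * (‖x‖ ^ 2 * ‖v‖ * ‖x‖ ^ (-2 : ℤ)) := by gcongr
    _ = Fintype.card ι * ‖v‖ := by
        rw [mul_right_comm, zpow_neg, zpow_ofNat, mul_inv_cancel₀ (pow_ne_zero 2 hx'), one_mul]

variable [DecidableEq ι]

theorem fderiv_norm_zpow_two_sub_card (i : ι) {x : EuclideanSpace ℝ ι} (hx : x ≠ 0) :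
    fderiv ℝ (fun y => ‖y‖ ^ (2 - Fintype.card ι : ℤ)) x (EuclideanSpace.single i 1) =
      (2 - Fintype.card ι) * radialField i x := by
  rw [(hasFDerivAt_norm_zpow _ hx).fderiv]
  simp [radialField, mul_assoc, mul_comm (x i), EuclideanSpace.inner_single_right]

theorem sum_apply_single_mul_radialField (L : EuclideanSpace ℝ ι →L[ℝ] ℝ)
    (x : EuclideanSpace ℝ ι) :
    ∑ i, L (EuclideanSpace.single i 1) * radialField i x =
      L x * ‖x‖ ^ (-Fintype.card ι : ℤ) := by
  have x_eq_sum : ∑ i, x i • EuclideanSpace.single i (1 : ℝ) = x := by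
    simpa using (EuclideanSpace.basisFun ι ℝ).sum_repr x
  conv_rhs => rw [← x_eq_sum, map_sum, x_eq_sum, Finset.sum_mul]
  refine Finset.sum_congr rfl fun i _ => ?_
  rw [radialField, map_smul, smul_eq_mul]
  ring

theorem sum_fderiv_radialField_eq_zero {x : EuclideanSpace ℝ ι} (hx : x ≠ 0) :
    ∑ i, fderiv ℝ (radialField i) x (EuclideanSpace.single i 1) = 0 := by
  have hx' : ‖x‖ ≠ 0 := norm_ne_zero_iff.2 hx
  have sum_sq : ∑ i, x i * x i = ‖x‖ ^ 2 := by
    rw [EuclideanSpace.real_norm_sq_eq]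
    simp only [sq]
  have diagonal_entry (i : ι) : fderiv ℝ (radialField i) x (EuclideanSpace.single i 1) =
      (1 - Fintype.card ι * (x i * x i) * ‖x‖ ^ (-2 : ℤ)) * ‖x‖ ^ (-Fintype.card ι : ℤ) := by
    simp [fderiv_radialField_apply i hx, EuclideanSpace.inner_single_right, mul_assoc]
  calc ∑ i, fderiv ℝ (radialField i) x (EuclideanSpace.single i 1)
    _ = (Fintype.card ι - Fintype.card ι * (∑ i, x i * x i) * ‖x‖ ^ (-2 : ℤ)) *
          ‖x‖ ^ (-Fintype.card ι : ℤ) := by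
        simp only [diagonal_entry, ← Finset.sum_mul, Finset.sum_sub_distrib, ← Finset.mul_sum,
          Finset.sum_const, Finset.card_univ, nsmul_one]
    _ = 0 := by
        rw [sum_sq, mul_assoc, zpow_neg, zpow_ofNat, mul_inv_cancel₀ (pow_ne_zero 2 hx'), mul_one,
          sub_self, zero_mul]

end RadialField

section SingularDivergence

variable {ι : Type*} [Fintype ι] [DecidableEq ι] {ψ : EuclideanSpace ℝ ι → ℝ}
  {F : ι → EuclideanSpace ℝ ι → ℝ} {c : ℝ}

theorem integral_one_sub_comp_inv_smul_mul_sum_fderiv (hψ : ContDiff ℝ 1 ψ)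
    (hψ1 : ψ =ᶠ[𝓝 0] 1) (hF : ∀ i, ContDiffOn ℝ 1 (F i) {0}ᶜ)
    (hFc : ∀ i, HasCompactSupport (F i)) (r : ℝ) :
    ∫ x, (1 - ψ (r⁻¹ • x)) * ∑ i, fderiv ℝ (F i) x (EuclideanSpace.single i 1) =
      ∑ i, ∫ x, fderiv ℝ (fun y => ψ (r⁻¹ • y)) x (EuclideanSpace.single i 1) * F i x := by
  let η : EuclideanSpace ℝ ι → ℝ := fun x => 1 - ψ (r⁻¹ • x)
  have hη : ContDiff ℝ 1 η := by fun_prop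
  have hη0 : tsupport η ⊆ {0}ᶜ :=
    tsupport_one_sub_subset_compl_singleton (eventuallyEq_one_comp_inv_smul hψ1 r)
  have hF' (i : ι) :
      ContinuousOn (fun x => fderiv ℝ (F i) x (EuclideanSpace.single i 1)) {0}ᶜ :=
    ((hF i).continuousOn_fderiv_of_isOpen isOpen_compl_singleton le_rfl).clm_apply
      continuousOn_const
  simp only [Finset.mul_sum]
  rw [integral_finsetSum]
  · refine Finset.sum_congr rfl fun i _ => ?_
    rw [integral_mul_fderiv_eq_neg_of_tsupport_subset isOpen_compl_singleton hη hη0 (hF i) (hFc i)]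
    simp only [η, fderiv_const_sub, neg_apply, neg_mul, integral_neg, neg_neg]
  · exact fun i _ => (continuous_mul_of_tsupport_subset isOpen_compl_singleton hη.continuous hη0
      (hF' i)).integrable_of_hasCompactSupport ((hFc i).fderiv_apply ℝ _).mul_left

variable [Nonempty ι]

theorem sum_integral_fderiv_mul_radialField (hψ : ContDiff ℝ 1 ψ) (hψc : HasCompactSupport ψ) :
    ∑ i, ∫ x, fderiv ℝ ψ x (EuclideanSpace.single i 1) * radialField i x =
      -(Fintype.card ι * volume.real (ball (0 : EuclideanSpace ℝ ι) 1) * ψ 0) := by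
  rw [← integral_finsetSum]
  · simp only [sum_apply_single_mul_radialField]
    simpa using integral_fderiv_apply_self_mul_zpow volume hψ hψc
  · exact fun i _ => integrable_mul_radialField
      ((hψ.continuous_fderiv one_ne_zero).clm_apply continuous_const) (hψc.fderiv_apply ℝ _) i

theorem sum_integral_fderiv_mul_eq_sub (hψ : ContDiff ℝ 1 ψ) (hψc : HasCompactSupport ψ)
    (hψ1 : ψ =ᶠ[𝓝 0] 1) (hF : ∀ i, ContinuousOn (F i) {0}ᶜ) (c : ℝ) :
    ∑ i, ∫ x, fderiv ℝ ψ x (EuclideanSpace.single i 1) * F i x =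
      ∑ i, (∫ x, fderiv ℝ ψ x (EuclideanSpace.single i 1) * (F i x - c * radialField i x)) -
        c * (Fintype.card ι * volume.real (ball (0 : EuclideanSpace ℝ ι) 1)) := by
  have flux : ∑ i, ∫ x, fderiv ℝ ψ x (EuclideanSpace.single i 1) * radialField i x =
      -(Fintype.card ι * volume.real (ball (0 : EuclideanSpace ℝ ι) 1)) := by
    rw [sum_integral_fderiv_mul_radialField hψ hψc, hψ1.eq_of_nhds, Pi.one_apply, mul_one]
  rw [sub_eq_add_neg, ← mul_neg, ← flux, Finset.mul_sum, ← Finset.sum_add_distrib]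
  refine Finset.sum_congr rfl fun i _ => ?_
  have mul_integrable {g : EuclideanSpace ℝ ι → ℝ} (hg : ContinuousOn g {0}ᶜ) :
      Integrable fun x => fderiv ℝ ψ x (EuclideanSpace.single i 1) * g x :=
    integrable_fderiv_apply_mul_of_eventuallyEq_one hψ hψc hψ1 hg _
  have remainder_integrable : Integrable fun x =>
      fderiv ℝ ψ x (EuclideanSpace.single i 1) * (F i x - c * radialField i x) :=
    mul_integrable ((hF i).sub ((continuousOn_radialField i).const_mul c))
  rw [← integral_const_mul, ← integral_add remainder_integrable
    ((mul_integrable (continuousOn_radialField i)).const_mul c)]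
  congr with x
  ring

theorem tendsto_sum_integral_fderiv_comp_inv_smul_mul (hψ : ContDiff ℝ 1 ψ)
    (hψc : HasCompactSupport ψ) (hψ1 : ψ =ᶠ[𝓝 0] 1) (hF : ∀ i, ContinuousOn (F i) {0}ᶜ)
    (hF0 : ∀ i, (fun x => F i x - c * radialField i x)
      =o[𝓝[≠] 0] fun x => ‖x‖ ^ (1 - finrank ℝ (EuclideanSpace ℝ ι) : ℤ)) :
    Tendsto (fun r : ℝ => ∑ i, ∫ x,
        fderiv ℝ (fun y => ψ (r⁻¹ • y)) x (EuclideanSpace.single i 1) * F i x)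
      (𝓝[>] 0)
      (𝓝 (-(c * (Fintype.card ι * volume.real (ball (0 : EuclideanSpace ℝ ι) 1))))) := by
  have remainder_tendsto : Tendsto (fun r : ℝ => ∑ i, ∫ x,
      fderiv ℝ (fun y => ψ (r⁻¹ • y)) x (EuclideanSpace.single i 1) *
        (F i x - c * radialField i x)) (𝓝[>] 0) (𝓝 0) := by
    simpa using tendsto_finsetSum Finset.univ fun i _ =>
      tendsto_integral_fderiv_comp_inv_smul_mul_of_isLittleO volume hψ hψc (hF0 i)
        (EuclideanSpace.single i 1)
  rw [← zero_sub]
  refine (remainder_tendsto.sub_const _).congr' ?_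
  filter_upwards [self_mem_nhdsWithin] with r hr
  exact (sum_integral_fderiv_mul_eq_sub (by fun_prop) (hasCompactSupport_comp_inv_smul hψc hr)
    (eventuallyEq_one_comp_inv_smul hψ1 r) hF c).symm

theorem integral_sum_fderiv_of_isLittleO_sub_radialField (hF : ∀ i, ContDiffOn ℝ 1 (F i) {0}ᶜ)
    (hFc : ∀ i, HasCompactSupport (F i))
    (hdiv : Integrable fun x => ∑ i, fderiv ℝ (F i) x (EuclideanSpace.single i 1))
    (hF0 : ∀ i, (fun x => F i x - c * radialField i x)
      =o[𝓝[≠] 0] fun x => ‖x‖ ^ (1 - finrank ℝ (EuclideanSpace ℝ ι) : ℤ)) :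
    ∫ x, ∑ i, fderiv ℝ (F i) x (EuclideanSpace.single i 1) =
      -(c * (Fintype.card ι * volume.real (ball (0 : EuclideanSpace ℝ ι) 1))) := by
  let ψ : ContDiffBump (0 : EuclideanSpace ℝ ι) := default
  have hψ : ContDiff ℝ 1 ψ := ψ.contDiff
  have hψ1 : ψ =ᶠ[𝓝 0] 1 := ψ.eventuallyEq_one
  have excised_tendsto := tendsto_integral_one_sub_comp_inv_smul_mul hψ.continuous
    ψ.hasCompactSupport hdiv
  simp only [integral_one_sub_comp_inv_smul_mul_sum_fderiv hψ hψ1 hF hFc] at excised_tendsto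
  exact tendsto_nhds_unique excised_tendsto <| tendsto_sum_integral_fderiv_comp_inv_smul_mul hψ
    ψ.hasCompactSupport hψ1 (fun i => (hF i).continuousOn) hF0

end SingularDivergence

section MatrixField

variable {ι : Type*} [Fintype ι] [DecidableEq ι]
  {w : ι → ι → EuclideanSpace ℝ ι → ℝ} {c : ℝ}

-- As the trace of the derivative of the radial field vanishes, `w` may be replaced by `w - w 0`,
-- and the Lipschitz bound on `w` makes up for the extra power of `‖x‖` in the denominator.
theorem norm_sum_mul_fderiv_radialField_le {L : ι → ι → NNReal}
    (hw : ∀ i j, LipschitzWith (L i j) (w i j)) (hw0 : ∀ i j, w i j 0 = if i = j then c else 0)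
    {x : EuclideanSpace ℝ ι} (hx : x ≠ 0) :
    ‖∑ i, ∑ j, w i j x * fderiv ℝ (radialField j) x (EuclideanSpace.single i 1)‖ ≤
      (∑ i, ∑ j, L i j * (1 + Fintype.card ι : ℝ)) *
        ‖x‖ ^ (1 - finrank ℝ (EuclideanSpace ℝ ι) : ℤ) := by
  have constant_part : ∑ i, ∑ j, w i j 0 * fderiv ℝ (radialField j) x (EuclideanSpace.single i 1)
      = 0 := by
    simp [hw0, ← Finset.mul_sum, sum_fderiv_radialField_eq_zero hx]
  rw [← sub_zero (∑ i, ∑ j, _), ← constant_part]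
  simp only [← Finset.sum_sub_distrib, ← sub_mul, Finset.sum_mul]
  refine norm_sum_le_of_le _ fun i _ => norm_sum_le_of_le _ fun j _ => ?_
  calc ‖(w i j x - w i j 0) * fderiv ℝ (radialField j) x (EuclideanSpace.single i 1)‖
    _ ≤ (L i j * ‖x‖) * ((1 + Fintype.card ι) * ‖x‖ ^ (-Fintype.card ι : ℤ)) := by
        rw [norm_mul]
        gcongr
        · simpa using (hw i j).norm_sub_le x 0
        · simpa using norm_fderiv_radialField_apply_le j hx (EuclideanSpace.single i 1)
    _ = L i j * (1 + Fintype.card ι) * ‖x‖ ^ (1 - finrank ℝ (EuclideanSpace ℝ ι) : ℤ) := by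
        rw [finrank_euclideanSpace, sub_eq_add_neg, zpow_add₀ (norm_ne_zero_iff.2 hx), zpow_one]
        ring

theorem isLittleO_sum_mul_radialField_sub (hw : ∀ i j, ContinuousAt (w i j) 0)
    (hw0 : ∀ i j, w i j 0 = if i = j then c else 0) (i : ι) :
    (fun x => ∑ j, w i j x * radialField j x - c * radialField i x)
      =o[𝓝[≠] 0] fun x => ‖x‖ ^ (1 - finrank ℝ (EuclideanSpace ℝ ι) : ℤ) := by
  have field_isBigO (j : ι) : (radialField j : EuclideanSpace ℝ ι → ℝ)
      =O[𝓝[≠] 0] fun x => ‖x‖ ^ (1 - finrank ℝ (EuclideanSpace ℝ ι) : ℤ) := by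
    refine .of_bound 1 ?_
    filter_upwards [self_mem_nhdsWithin] with x hx
    simpa using norm_radialField_le j hx
  have oscillation_isLittleO (j : ι) :
      (fun x => w i j x - w i j 0) =o[𝓝[≠] 0] fun _ => (1 : ℝ) := by
    rw [isLittleO_one_iff, ← sub_self (w i j 0)]
    exact ((hw i j).tendsto.mono_left nhdsWithin_le_nhds).sub_const _
  have remainder_eq (x : EuclideanSpace ℝ ι) :
      ∑ j, (w i j x - w i j 0) * radialField j x =
        ∑ j, w i j x * radialField j x - c * radialField i x := by
    simp [sub_mul, hw0]
  simp only [← remainder_eq]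
  exact .fun_sum fun j _ => by
    simpa using (oscillation_isLittleO j).mul_isBigO (field_isBigO j)

variable [Nonempty ι]

theorem integrable_sum_mul_fderiv_radialField (hw : ∀ i j, ContDiff ℝ 1 (w i j))
    (hwc : ∀ i j, HasCompactSupport (w i j)) (hw0 : ∀ i j, w i j 0 = if i = j then c else 0) :
    Integrable fun x =>
      ∑ i, ∑ j, w i j x * fderiv ℝ (radialField j) x (EuclideanSpace.single i 1) := by
  choose L hL using fun i j =>
    ContDiff.lipschitzWith_of_hasCompactSupport (hwc i j) (hw i j) one_ne_zero
  refine integrable_of_hasCompactSupport_of_norm_le_zpow ?_ ?_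
    fun x hx => norm_sum_mul_fderiv_radialField_le hL hw0 hx
  · exact continuousOn_finsetSum _ fun i _ => continuousOn_finsetSum _ fun j _ =>
      (hw i j).continuous.continuousOn.mul (continuousOn_fderiv_radialField_apply j _)
  · exact hasCompactSupport_finsetSum _ fun i _ => hasCompactSupport_finsetSum _ fun j _ =>
      (hwc i j).mul_right

theorem integrable_sum_fderiv_mul_radialField (hw : ∀ i j, ContDiff ℝ 1 (w i j))
    (hwc : ∀ i j, HasCompactSupport (w i j)) (hw0 : ∀ i j, w i j 0 = if i = j then c else 0) :
    Integrable fun x =>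
      ∑ i, ∑ j, fderiv ℝ (fun y => w i j y * radialField j y) x (EuclideanSpace.single i 1) := by
  have gradient_part : Integrable fun x =>
      ∑ i, ∑ j, fderiv ℝ (w i j) x (EuclideanSpace.single i 1) * radialField j x :=
    integrable_finsetSum _ fun i _ => integrable_finsetSum _ fun j _ =>
      integrable_mul_radialField
        (((hw i j).continuous_fderiv one_ne_zero).clm_apply continuous_const)
        ((hwc i j).fderiv_apply ℝ _) j
  refine (gradient_part.add (integrable_sum_mul_fderiv_radialField hw hwc hw0)).congr ?_
  filter_upwards [compl_mem_ae_iff.2 (measure_singleton 0)] with x hx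
  simp only [Pi.add_apply, ← Finset.sum_add_distrib,
    fderiv_mul_apply ((hw _ _).differentiable one_ne_zero x) (differentiableAt_radialField _ hx)]

theorem integral_sum_fderiv_mul_radialField (hw : ∀ i j, ContDiff ℝ 1 (w i j))
    (hwc : ∀ i j, HasCompactSupport (w i j)) (hw0 : ∀ i j, w i j 0 = if i = j then c else 0) :
    ∫ x, ∑ i, ∑ j, fderiv ℝ (fun y => w i j y * radialField j y) x (EuclideanSpace.single i 1) =
      -(c * (Fintype.card ι * volume.real (ball (0 : EuclideanSpace ℝ ι) 1))) := by
  have term_contDiffOn (i j : ι) : ContDiffOn ℝ 1 (fun y => w i j y * radialField j y) {0}ᶜ :=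
    (hw i j).contDiffOn.mul (contDiffOn_radialField j)
  have sum_fderiv_ae_eq : (fun x => ∑ i,
      fderiv ℝ (fun y => ∑ j, w i j y * radialField j y) x (EuclideanSpace.single i 1)) =ᵐ[volume]
      fun x => ∑ i, ∑ j,
        fderiv ℝ (fun y => w i j y * radialField j y) x (EuclideanSpace.single i 1) := by
    filter_upwards [compl_mem_ae_iff.2 (measure_singleton 0)] with x hx
    refine Finset.sum_congr rfl fun i _ => ?_
    rw [fderiv_fun_sum fun j _ => ((term_contDiffOn i j).differentiableOn
      one_ne_zero).differentiableAt (isOpen_compl_singleton.mem_nhds hx), sum_apply]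
  rw [← integral_congr_ae sum_fderiv_ae_eq]
  exact integral_sum_fderiv_of_isLittleO_sub_radialField
    (fun i => .sum fun j _ => term_contDiffOn i j)
    (fun i => hasCompactSupport_finsetSum _ fun j _ => (hwc i j).mul_right)
    ((integrable_sum_fderiv_mul_radialField hw hwc hw0).congr sum_fderiv_ae_eq.symm)
    (isLittleO_sum_mul_radialField_sub (fun i j => (hw i j).continuous.continuousAt) hw0)

end MatrixField

section DivergenceForm

variable {ι : Type*} [Fintype ι] [DecidableEq ι] {U : Set (EuclideanSpace ℝ ι)}
  {a : EuclideanSpace ℝ ι → ι → ι → ℝ} {φ : EuclideanSpace ℝ ι → ℝ}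

theorem mul_sum_fderiv_mul_radialField (hU : IsOpen U)
    (ha : ∀ i j, ContDiffOn ℝ 1 (fun y => a y i j) U) (hφ : ContDiff ℝ 1 φ)
    (hφU : tsupport φ ⊆ U) {x : EuclideanSpace ℝ ι} (hx : x ≠ 0) :
    φ x * ∑ i, ∑ j, fderiv ℝ (fun y => a y i j * radialField j y) x (EuclideanSpace.single i 1) =
      ∑ i, ∑ j, fderiv ℝ (fun y => φ y * a y i j * radialField j y) x
          (EuclideanSpace.single i 1) -
        ∑ i, ∑ j, a x i j * fderiv ℝ φ x (EuclideanSpace.single i 1) * radialField j x := by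
  simp only [Finset.mul_sum, ← Finset.sum_sub_distrib]
  refine Finset.sum_congr rfl fun i _ => Finset.sum_congr rfl fun j _ => ?_
  by_cases hxφ : x ∈ tsupport φ
  · have ha_diff : DifferentiableAt ℝ (fun y => a y i j) x :=
      ((ha i j).differentiableOn one_ne_zero).differentiableAt (hU.mem_nhds (hφU hxφ))
    simp only [mul_assoc (φ _)]
    rw [fderiv_mul_apply (hφ.differentiable one_ne_zero x)
      (ha_diff.fun_mul (differentiableAt_radialField j hx))]
    ring
  · have product_zero : (fun y => φ y * a y i j * radialField j y) =ᶠ[𝓝 x] 0 := by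
      filter_upwards [notMem_tsupport_iff_eventuallyEq.1 hxφ] with y hy
      simp [hy]
    simp [product_zero.fderiv_eq, fderiv_of_notMem_tsupport ℝ hxφ,
      image_eq_zero_of_notMem_tsupport hxφ, Pi.zero_def]

theorem sum_mul_fderiv_norm_zpow {x : EuclideanSpace ℝ ι} (hx : x ≠ 0) :
    ∑ i, ∑ j, a x i j * fderiv ℝ φ x (EuclideanSpace.single i 1) *
        fderiv ℝ (fun z => ‖z‖ ^ (2 - Fintype.card ι : ℤ)) x (EuclideanSpace.single j 1) =
      (2 - Fintype.card ι) *
        ∑ i, ∑ j, a x i j * fderiv ℝ φ x (EuclideanSpace.single i 1) * radialField j x := by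
  simp only [fderiv_norm_zpow_two_sub_card _ hx, Finset.mul_sum]
  refine Finset.sum_congr rfl fun i _ => Finset.sum_congr rfl fun j _ => ?_
  ring

theorem sum_fderiv_mul_fderiv_norm_zpow {x : EuclideanSpace ℝ ι} (hx : x ≠ 0) :
    ∑ i, ∑ j, fderiv ℝ (fun y => a y i j *
        fderiv ℝ (fun z => ‖z‖ ^ (2 - Fintype.card ι : ℤ)) y (EuclideanSpace.single j 1))
        x (EuclideanSpace.single i 1) =
      (2 - Fintype.card ι) *
        ∑ i, ∑ j, fderiv ℝ (fun y => a y i j * radialField j y) x (EuclideanSpace.single i 1) := by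
  simp only [Finset.mul_sum]
  refine Finset.sum_congr rfl fun i _ => Finset.sum_congr rfl fun j _ => ?_
  have near_x : (fun y => a y i j *
      fderiv ℝ (fun z => ‖z‖ ^ (2 - Fintype.card ι : ℤ)) y (EuclideanSpace.single j 1)) =ᶠ[𝓝 x]
      (2 - Fintype.card ι : ℝ) • fun y => a y i j * radialField j y := by
    filter_upwards [isOpen_compl_singleton.mem_nhds hx] with y hy
    simp only [fderiv_norm_zpow_two_sub_card j hy, Pi.smul_apply, smul_eq_mul]
    ring
  rw [near_x.fderiv_eq, fderiv_const_smul_field, Pi.smul_apply, _root_.smul_apply, smul_eq_mul]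

variable [Nonempty ι]

theorem integrable_sum_mul_fderiv_mul_radialField (hU : IsOpen U)
    (ha : ∀ i j, ContinuousOn (fun y => a y i j) U) (hφ : ContDiff ℝ 1 φ)
    (hφc : HasCompactSupport φ) (hφU : tsupport φ ⊆ U) :
    Integrable fun x =>
      ∑ i, ∑ j, a x i j * fderiv ℝ φ x (EuclideanSpace.single i 1) * radialField j x := by
  refine integrable_finsetSum _ fun i _ => integrable_finsetSum _ fun j _ => ?_
  simp only [mul_comm (a _ i j)]
  exact integrable_mul_radialField
    (continuous_mul_of_tsupport_subset hU
      ((hφ.continuous_fderiv one_ne_zero).clm_apply continuous_const)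
      ((tsupport_fderiv_apply_subset ℝ _).trans hφU) (ha i j))
    (hφc.fderiv_apply ℝ _).mul_right j

theorem integrable_mul_sum_fderiv_mul_radialField (hU : IsOpen U)
    (ha : ∀ i j, ContDiffOn ℝ 1 (fun y => a y i j) U)
    (ha0 : ∀ i j, a 0 i j = if i = j then 1 else 0) (hφ : ContDiff ℝ 1 φ)
    (hφc : HasCompactSupport φ) (hφU : tsupport φ ⊆ U) :
    Integrable fun x => φ x *
      ∑ i, ∑ j, fderiv ℝ (fun y => a y i j * radialField j y) x (EuclideanSpace.single i 1) := by
  refine ((integrable_sum_fderiv_mul_radialField (w := fun i j y => φ y * a y i j) (c := φ 0)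
    (fun i j => contDiff_mul_of_tsupport_subset hU hφ hφU (ha i j)) (fun i j => hφc.mul_right)
    (fun i j => by simp [ha0])).sub (integrable_sum_mul_fderiv_mul_radialField hU
      (fun i j => (ha i j).continuousOn) hφ hφc hφU)).congr ?_
  filter_upwards [compl_mem_ae_iff.2 (measure_singleton 0)] with x hx
  exact (mul_sum_fderiv_mul_radialField hU ha hφ hφU hx).symm

theorem integral_sum_mul_fderiv_mul_radialField (hU : IsOpen U)
    (ha : ∀ i j, ContDiffOn ℝ 1 (fun y => a y i j) U)
    (ha0 : ∀ i j, a 0 i j = if i = j then 1 else 0) (hφ : ContDiff ℝ 1 φ)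
    (hφc : HasCompactSupport φ) (hφU : tsupport φ ⊆ U) :
    ∫ x, ∑ i, ∑ j, a x i j * fderiv ℝ φ x (EuclideanSpace.single i 1) * radialField j x =
      -(φ 0 * (Fintype.card ι * volume.real (ball (0 : EuclideanSpace ℝ ι) 1))) -
        ∫ x, φ x * ∑ i, ∑ j,
          fderiv ℝ (fun y => a y i j * radialField j y) x (EuclideanSpace.single i 1) := by
  rw [← integral_sum_fderiv_mul_radialField (w := fun i j y => φ y * a y i j)
    (fun i j => contDiff_mul_of_tsupport_subset hU hφ hφU (ha i j)) (fun i j => hφc.mul_right)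
    (fun i j => by simp [ha0]), eq_sub_iff_add_eq, ← integral_add
    (integrable_sum_mul_fderiv_mul_radialField hU (fun i j => (ha i j).continuousOn) hφ hφc hφU)
    (integrable_mul_sum_fderiv_mul_radialField hU ha ha0 hφ hφc hφU)]
  refine integral_congr_ae ?_
  filter_upwards [compl_mem_ae_iff.2 (measure_singleton 0)] with x hx
  rw [mul_sum_fderiv_mul_radialField hU ha hφ hφU hx, add_sub_cancel]

theorem stmt_10_general (hU : IsOpen U) (ha : ∀ i j, ContDiffOn ℝ 1 (fun y => a y i j) U)
    (ha0 : ∀ i j, a 0 i j = if i = j then 1 else 0) (hφ : ContDiff ℝ 1 φ)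
    (hφc : HasCompactSupport φ) (hφU : tsupport φ ⊆ U) :
    IntegrableOn (fun x => ∑ i, ∑ j, a x i j * fderiv ℝ φ x (EuclideanSpace.single i 1) *
      fderiv ℝ (fun z => ‖z‖ ^ (2 - Fintype.card ι : ℤ)) x (EuclideanSpace.single j 1)) U ∧
    IntegrableOn (fun x => φ x * ∑ i, ∑ j, fderiv ℝ (fun y => a y i j *
      fderiv ℝ (fun z => ‖z‖ ^ (2 - Fintype.card ι : ℤ)) y (EuclideanSpace.single j 1))
      x (EuclideanSpace.single i 1)) U ∧
    ∫ x in U, ∑ i, ∑ j, a x i j * fderiv ℝ φ x (EuclideanSpace.single i 1) *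
        fderiv ℝ (fun z => ‖z‖ ^ (2 - Fintype.card ι : ℤ)) x (EuclideanSpace.single j 1) =
      Fintype.card ι * (Fintype.card ι - 2) * volume.real (ball (0 : EuclideanSpace ℝ ι) 1) * φ 0 -
        ∫ x in U, φ x * ∑ i, ∑ j, fderiv ℝ (fun y => a y i j *
          fderiv ℝ (fun z => ‖z‖ ^ (2 - Fintype.card ι : ℤ)) y (EuclideanSpace.single j 1))
          x (EuclideanSpace.single i 1) := by
  have flux_ae_eq : (fun x => ∑ i, ∑ j, a x i j * fderiv ℝ φ x (EuclideanSpace.single i 1) *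
      fderiv ℝ (fun z => ‖z‖ ^ (2 - Fintype.card ι : ℤ)) x (EuclideanSpace.single j 1)) =ᵐ[volume]
      fun x => (2 - Fintype.card ι) * ∑ i, ∑ j,
        a x i j * fderiv ℝ φ x (EuclideanSpace.single i 1) * radialField j x := by
    filter_upwards [compl_mem_ae_iff.2 (measure_singleton 0)] with x hx
      using sum_mul_fderiv_norm_zpow hx
  have source_ae_eq : (fun x => φ x * ∑ i, ∑ j, fderiv ℝ (fun y => a y i j *
      fderiv ℝ (fun z => ‖z‖ ^ (2 - Fintype.card ι : ℤ)) y (EuclideanSpace.single j 1))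
      x (EuclideanSpace.single i 1)) =ᵐ[volume]
      fun x => (2 - Fintype.card ι) * (φ x * ∑ i, ∑ j,
        fderiv ℝ (fun y => a y i j * radialField j y) x (EuclideanSpace.single i 1)) := by
    filter_upwards [compl_mem_ae_iff.2 (measure_singleton 0)] with x hx
    rw [sum_fderiv_mul_fderiv_norm_zpow hx, mul_left_comm]
  refine ⟨?_, ?_, ?_⟩
  · exact (((integrable_sum_mul_fderiv_mul_radialField hU (fun i j => (ha i j).continuousOn) hφ hφc
      hφU).const_mul _).congr flux_ae_eq.symm).integrableOn
  · exact (((integrable_mul_sum_fderiv_mul_radialField hU ha ha0 hφ hφc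
      hφU).const_mul _).congr source_ae_eq.symm).integrableOn
  · rw [setIntegral_eq_integral_of_forall_compl_eq_zero fun x hx => by
        simp [fderiv_of_notMem_tsupport ℝ fun h => hx (hφU h)],
      setIntegral_eq_integral_of_forall_compl_eq_zero fun x hx => by
        simp [image_eq_zero_of_notMem_tsupport fun h => hx (hφU h)],
      integral_congr_ae flux_ae_eq, integral_congr_ae source_ae_eq, integral_const_mul,
      integral_const_mul, integral_sum_mul_fderiv_mul_radialField hU ha ha0 hφ hφc hφU]
    ring

end DivergenceForm

theorem norm_zpow_two_sub_card_fin_three :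
    (fun z : E3 => ‖z‖ ^ (2 - Fintype.card (Fin 3) : ℤ)) = fun z => ‖z‖⁻¹ := by
  ext z
  rw [Fintype.card_fin, ← zpow_neg_one]
  norm_num

theorem card_mul_volume_real_ball_fin_three :
    (Fintype.card (Fin 3) * (Fintype.card (Fin 3) - 2) * volume.real (ball (0 : E3) 1) : ℝ) =
      4 * Real.pi := by
  rw [Measure.real, EuclideanSpace.volume_ball_fin_three, ENNReal.toReal_mul,
    ENNReal.toReal_ofReal (by positivity), Fintype.card_fin]
  norm_num
  ring

/-- With `a` as in Statement 9 (a `C²` symmetric matrix field on the unit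
ball `B` with `a(0) = I` and `Da(0) = 0`) and
`f(x) = Σ_{i,j} ∂_i(a^{ij}(x) ∂_j |x|⁻¹)`, for every test function `φ ∈ C_c^∞(B)` both
integrals converge absolutely and
`∫_B Σ_{i,j} a^{ij} ∂_iφ ∂_j(|x|⁻¹) dx = 4π φ(0) − ∫_B φ f dx`. -/
theorem stmt_10 (a : E3 → Fin 3 → Fin 3 → ℝ)
    (ha : ∀ i j, ContDiffOn ℝ 2 (fun y => a y i j) (ball (0 : E3) 1))
    (hsym : ∀ x ∈ ball (0 : E3) 1, ∀ i j, a x i j = a x j i)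
    (ha0 : ∀ i j, a 0 i j = if i = j then (1 : ℝ) else 0)
    (hDa0 : ∀ i j, fderiv ℝ (fun y => a y i j) 0 = 0)
    (φ : E3 → ℝ) (hφ : ContDiff ℝ (⊤ : ℕ∞) φ) (hφc : HasCompactSupport φ)
    (hφs : tsupport φ ⊆ ball (0 : E3) 1) :
    IntegrableOn (fun x => ∑ i, ∑ j, a x i j *
        fderiv ℝ φ x (EuclideanSpace.single i 1) *
        fderiv ℝ (fun z : E3 => ‖z‖⁻¹) x (EuclideanSpace.single j 1))
      (ball (0 : E3) 1) volume ∧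
    IntegrableOn (fun x => φ x *
        ∑ i, ∑ j, fderiv ℝ
          (fun y => a y i j * fderiv ℝ (fun z : E3 => ‖z‖⁻¹) y (EuclideanSpace.single j 1))
          x (EuclideanSpace.single i 1))
      (ball (0 : E3) 1) volume ∧
    ∫ x in ball (0 : E3) 1, (∑ i, ∑ j, a x i j *
        fderiv ℝ φ x (EuclideanSpace.single i 1) *
        fderiv ℝ (fun z : E3 => ‖z‖⁻¹) x (EuclideanSpace.single j 1)) =
      4 * Real.pi * φ 0 -
        ∫ x in ball (0 : E3) 1, (φ x *
          ∑ i, ∑ j, fderiv ℝ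
            (fun y => a y i j * fderiv ℝ (fun z : E3 => ‖z‖⁻¹) y (EuclideanSpace.single j 1))
            x (EuclideanSpace.single i 1)) := by
  simpa only [norm_zpow_two_sub_card_fin_three, card_mul_volume_real_ball_fin_three] using
    stmt_10_general isOpen_ball (fun i j => (ha i j).of_le one_le_two) ha0
      (hφ.of_le (mod_cast le_top)) hφc hφs
end
end

section
/- Fix τ ∈ (0, 1), constants 0 < λ ≤ Λ, and K, M > 0. There exist C > 0 and r₁ ∈ (0, 1), depending only on τ, λ, Λ, K, M, with the following property. Let B be the open unit ball in ℝ³ and let a = (a^{ij}) : B → (real symmetric 3×3 matrices) be C² with C²-norm at most M and with λ|ξ|² ≤ ⟨a(x)ξ, ξ⟩ ≤ Λ|ξ|² for all x ∈ B, ξ ∈ ℝ³. Let e : B → ℝ be continuous on B and C² on B ∖ {0}, and let f : B ∖ {0} → ℝ be C¹ with |f(x)| ≤ K |x|^{-1} and |∇f(x)| ≤ K |x|^{-2} on B ∖ {0}. Assume that Σ_{i,j} ∂_i ( a^{ij}(x) ∂_j e(x) ) = f(x) for all x ∈ B ∖ {0}, and that |e(x) − e(0)| ≤ K |x|^{1−τ}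 for all x ∈ B. Then |∇e(x)| ≤ C |x|^{−τ} and |∇² e(x)| ≤ C |x|^{−1−τ} for all 0 < |x| ≤ r₁. -/
open Metric Set
open scoped BigOperators

noncomputable section

/-! The mean of `∇²u` over the ball of radius `t` about `x` against a bump `φ` is differentiable in
`t`, and its derivative is `t⁻¹` times a mean against a Laplacian `Δψ`. Integrating by parts moves
that Laplacian onto `u`, so the derivative is controlled by the Lipschitz constant of `Δu`.
Integrating in `t` bounds `∇²u x` by `sup |u|` and the Lipschitz constant of `Δu`, and a linear
change of variables extends this to constant coefficients. For variable coefficients, freeze them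
at a point maximizing `(r - |x - x₀|)² |∇²u|`: on a small ball about it the error terms
are absorbed into the left-hand side. The theorem is this interior estimate on the ball of radius
`|x| / 2` about `x`. -/

open MeasureTheory Filter Topology
open scoped ContDiff

section Hessian

variable {E : Type*} [NormedAddCommGroup E] [NormedSpace ℝ E] {u : E → ℝ}

/-- The Hessian of `u` as a bilinear form: `hess u x v w` is the second derivative of `u` at `x`
along `w` and then along `v`. -/
abbrev hess (u : E → ℝ) : E → E →L[ℝ] E →L[ℝ] ℝ := fderiv ℝ (fderiv ℝ u)

theorem norm_iteratedFDeriv_two_eq_norm_hess (u : E → ℝ) (x : E) :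
    ‖iteratedFDeriv ℝ 2 u x‖ = ‖hess u x‖ := by
  rw [← norm_iteratedFDeriv_fderiv, norm_iteratedFDeriv_one]

theorem differentiableAt_fderiv_of_contDiffAt_two {x : E} (hu : ContDiffAt ℝ 2 u x) :
    DifferentiableAt ℝ (fderiv ℝ u) x :=
  (hu.fderiv_right (m := 1) (by norm_num)).differentiableAt one_ne_zero

theorem differentiable_fderiv_of_contDiff_two (hu : ContDiff ℝ 2 u) :
    Differentiable ℝ (fderiv ℝ u) := fun _ =>
  differentiableAt_fderiv_of_contDiffAt_two hu.contDiffAt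

theorem continuous_hess (hu : ContDiff ℝ 2 u) : Continuous (hess u) :=
  (hu.fderiv_right (m := 1) (by norm_num)).continuous_fderiv one_ne_zero

theorem continuous_norm_hess (hu : ContDiff ℝ 2 u) : Continuous fun y => ‖hess u y‖ :=
  Continuous.norm (E := E →L[ℝ] E →L[ℝ] ℝ) (continuous_hess hu)

theorem continuous_hess_apply (hu : ContDiff ℝ 2 u) (v w : E) :
    Continuous fun y => hess u y v w :=
  ((continuous_hess hu).clm_apply continuous_const).clm_apply continuous_const

theorem hasCompactSupport_hess_apply (hu : HasCompactSupport u) (v w : E) :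
    HasCompactSupport fun y => hess u y v w :=
  ((hu.fderiv ℝ).fderiv ℝ).comp_left (g := fun B : E →L[ℝ] E →L[ℝ] ℝ => B v w) (by simp)

theorem contDiff_fderiv_apply {m n : ℕ∞ω} (hu : ContDiff ℝ n u) (hmn : m + 1 ≤ n) (v : E) :
    ContDiff ℝ m fun x => fderiv ℝ u x v :=
  (hu.fderiv_right hmn).clm_apply contDiff_const

theorem fderiv_fderiv_apply {x : E} (hu : DifferentiableAt ℝ (fderiv ℝ u) x) (v w : E) :
    fderiv ℝ (fun y => fderiv ℝ u y w) x v = hess u x v w := by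
  rw [fderiv_clm_apply hu (differentiableAt_const w)]
  simp

theorem hess_comm (hu : ContDiff ℝ 2 u) (x v w : E) : hess u x v w = hess u x w v :=
  hu.contDiffAt.isSymmSndFDerivAt (by simp) v w

theorem contDiff_comp_add_clm {F : Type*} [NormedAddCommGroup F] [NormedSpace ℝ F] {n : ℕ∞ω}
    (hu : ContDiff ℝ n u) (x : E) (T : F →L[ℝ] E) : ContDiff ℝ n fun z => u (x + T z) :=
  hu.comp (contDiff_const.add T.contDiff)

theorem hess_comp_add_clm {F : Type*} [NormedAddCommGroup F] [NormedSpace ℝ F]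
    (hu : ContDiff ℝ 2 u) (x : E) (T : F →L[ℝ] E) (y : F) :
    hess (fun z => u (x + T z)) y = (hess u (x + T y)).bilinearComp T T := by
  have hT (z : F) : HasFDerivAt (fun z => x + T z) T z := T.hasFDerivAt.const_add x
  have hfderiv : fderiv ℝ (fun z => u (x + T z)) = fun z => (fderiv ℝ u (x + T z)).comp T :=
    funext fun z => ((hu.differentiable two_ne_zero _).hasFDerivAt.comp z (hT z)).fderiv
  ext v w
  rw [← fderiv_fderiv_apply
    (differentiable_fderiv_of_contDiff_two (contDiff_comp_add_clm hu x T) y), hfderiv]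
  have happly := ((differentiable_fderiv_of_contDiff_two hu (x + T y)).hasFDerivAt.comp y
    (hT y)).clm_apply (hasFDerivAt_const (T w) y)
  refine (congrArg (fun L => L v) happly.fderiv).trans ?_
  simp

theorem hess_comp_add_smul (hu : ContDiff ℝ 2 u) (x : E) (t : ℝ) (y : E) :
    hess (fun z => u (x + t • z)) y = t ^ 2 • hess u (x + t • y) := by
  have h := hess_comp_add_clm hu x (t • ContinuousLinearMap.id ℝ E) y
  ext v w
  simpa [sq, mul_assoc] using congrArg (fun L => L v w) h

theorem norm_fderiv_sub_le_of_norm_hess_le (hu : ContDiff ℝ 2 u) {s : Set E} (hs : Convex ℝ s)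
    {N : ℝ} (hN : ∀ z ∈ s, ‖hess u z‖ ≤ N) {y z : E} (hy : y ∈ s) (hz : z ∈ s) :
    ‖fderiv ℝ u z - fderiv ℝ u y‖ ≤ N * ‖z - y‖ :=
  hs.norm_image_sub_le_of_norm_fderiv_le
    (fun w _ => differentiable_fderiv_of_contDiff_two hu w) hN hy hz

theorem abs_sub_sub_fderiv_le_of_norm_hess_le (hu : ContDiff ℝ 2 u) {y z : E} {h N : ℝ}
    (hN : ∀ w ∈ closedBall y h, ‖hess u w‖ ≤ N) (hz : z ∈ closedBall y h) :
    |u z - u y - fderiv ℝ u y (z - y)| ≤ N * h * h := by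
  have hh : 0 ≤ h := dist_nonneg.trans hz
  have hy : y ∈ closedBall y h := mem_closedBall_self hh
  have hN0 : 0 ≤ N := (norm_nonneg (hess u y)).trans (hN y hy)
  have hfderiv : ∀ w ∈ closedBall y h, ‖fderiv ℝ u w - fderiv ℝ u y‖ ≤ N * h := fun w hw =>
    (norm_fderiv_sub_le_of_norm_hess_le hu (convex_closedBall y h) hN hy hw).trans
      (mul_le_mul_of_nonneg_left (mem_closedBall_iff_norm.1 hw) hN0)
  calc |u z - u y - fderiv ℝ u y (z - y)|
    _ ≤ N * h * ‖z - y‖ := (convex_closedBall y h).norm_image_sub_le_of_norm_fderiv_le'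
        (fun w _ => hu.differentiable two_ne_zero w) hfderiv hy hz
    _ ≤ N * h * h := by gcongr; exact mem_closedBall_iff_norm.1 hz

theorem norm_fderiv_le_of_abs_le_of_norm_hess_le (hu : ContDiff ℝ 2 u) {y : E} {h S N : ℝ}
    (hh : 0 < h) (hS : ∀ z ∈ closedBall y h, |u z| ≤ S)
    (hN : ∀ z ∈ closedBall y h, ‖hess u z‖ ≤ N) :
    ‖fderiv ℝ u y‖ ≤ 2 * S / h + N * h := by
  have hy : y ∈ closedBall y h := mem_closedBall_self hh.le
  have hS0 : 0 ≤ S := (abs_nonneg _).trans (hS y hy)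
  have hN0 : 0 ≤ N := (norm_nonneg (hess u y)).trans (hN y hy)
  refine ContinuousLinearMap.opNorm_le_of_unit_norm (by positivity) fun v hv => ?_
  have hz : y + h • v ∈ closedBall y h := by
    simp [norm_smul, hv, abs_of_pos hh]
  have htaylor := abs_sub_sub_fderiv_le_of_norm_hess_le hu hN hz
  rw [add_sub_cancel_left, map_smul, smul_eq_mul] at htaylor
  have hmul : h * |fderiv ℝ u y v| ≤ 2 * S + N * h * h := by
    rw [← abs_of_pos hh, ← abs_mul, abs_of_pos hh, abs_le]
    have hy' := abs_le.1 (hS y hy)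
    have hz' := abs_le.1 (hS _ hz)
    constructor <;> linarith [abs_le.1 htaylor]
  rw [Real.norm_eq_abs, div_add' _ _ _ hh.ne', le_div_iff₀' hh]
  exact hmul

end Hessian

section IntegrationByParts

variable {E : Type*} [NormedAddCommGroup E] [NormedSpace ℝ E] [FiniteDimensional ℝ E]
  [MeasurableSpace E] [BorelSpace E] {μ : Measure E} [μ.IsAddHaarMeasure] {g h ψ u : E → ℝ}

theorem integral_mul_fderiv_apply (hh : ContDiff ℝ 1 h) (hc : HasCompactSupport h)
    (hg : ContDiff ℝ 1 g) (v : E) :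
    ∫ x, h x * fderiv ℝ g x v ∂μ = -∫ x, fderiv ℝ h x v * g x ∂μ := by
  have hh' := (contDiff_fderiv_apply (m := 0) hh (by norm_num) v).continuous
  have hg' := (contDiff_fderiv_apply (m := 0) hg (by norm_num) v).continuous
  refine integral_mul_fderiv_eq_neg_fderiv_mul_of_integrable ?_ ?_ ?_
    (fun x _ => hh.differentiable one_ne_zero x) (fun x _ => hg.differentiable one_ne_zero x)
  · exact (hh'.mul hg.continuous).integrable_of_hasCompactSupport (hc.fderiv_apply ℝ v).mul_right
  · exact (hh.continuous.mul hg').integrable_of_hasCompactSupport hc.mul_right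
  · exact (hh.continuous.mul hg.continuous).integrable_of_hasCompactSupport hc.mul_right

theorem integral_hess_mul (hψ : ContDiff ℝ 2 ψ) (hc : HasCompactSupport ψ) (hu : ContDiff ℝ 2 u)
    (v w : E) : ∫ x, hess ψ x v w * u x ∂μ = ∫ x, ψ x * hess u x v w ∂μ := by
  have hψ' := contDiff_fderiv_apply (m := 1) hψ (by norm_num) w
  have hu' := contDiff_fderiv_apply (m := 1) hu (by norm_num) v
  simp_rw [hess_comm hu _ v w,
    ← fderiv_fderiv_apply (differentiable_fderiv_of_contDiff_two hψ _),
    ← fderiv_fderiv_apply (differentiable_fderiv_of_contDiff_two hu _)]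
  rw [integral_mul_fderiv_apply (hψ.of_le one_le_two) hc hu',
    integral_mul_fderiv_apply hψ' (hc.fderiv_apply ℝ w) (hu.of_le one_le_two), neg_neg]

theorem integral_hess_eq_zero (hψ : ContDiff ℝ 2 ψ) (hc : HasCompactSupport ψ) (v w : E) :
    ∫ x, hess ψ x v w ∂μ = 0 := by
  simpa [hess] using integral_hess_mul (μ := μ) hψ hc (contDiff_const (c := (1 : ℝ))) v w

theorem integral_fderiv_mul_fderiv_comm (hh : ContDiff ℝ 2 h) (hc : HasCompactSupport h)
    (hg : ContDiff ℝ 1 g) (v w : E) :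
    ∫ x, fderiv ℝ h x v * fderiv ℝ g x w ∂μ = ∫ x, fderiv ℝ h x w * fderiv ℝ g x v ∂μ := by
  have hh' := contDiff_fderiv_apply (m := 1) hh (by norm_num)
  rw [integral_mul_fderiv_apply (hh' v) (hc.fderiv_apply ℝ v) hg,
    integral_mul_fderiv_apply (hh' w) (hc.fderiv_apply ℝ w) hg]
  simp_rw [fderiv_fderiv_apply (differentiable_fderiv_of_contDiff_two hh _), hess_comm hh _ w v]

theorem integral_hess_mul_hess_comm (hψ : ContDiff ℝ 3 ψ) (hc : HasCompactSupport ψ)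
    (hu : ContDiff ℝ 2 u) (p q v w : E) :
    ∫ x, hess ψ x p q * hess u x v w ∂μ = ∫ x, hess ψ x v w * hess u x p q ∂μ := by
  have hψ2 : ContDiff ℝ 2 ψ := hψ.of_le (by norm_num)
  have hswap (p q v w : E) :
      ∫ x, hess ψ x p q * hess u x v w ∂μ = ∫ x, hess ψ x v q * hess u x p w ∂μ := by
    simp_rw [← fderiv_fderiv_apply (differentiable_fderiv_of_contDiff_two hψ2 _),
      ← fderiv_fderiv_apply (differentiable_fderiv_of_contDiff_two hu _)]
    exact integral_fderiv_mul_fderiv_comm (contDiff_fderiv_apply hψ (by norm_num) q)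
      (hc.fderiv_apply ℝ q) (contDiff_fderiv_apply hu (by norm_num) w) p v
  rw [hswap p q v w]
  simp_rw [hess_comm hψ2 _ v q, hess_comm hu _ p w]
  rw [hswap q v w p]
  simp_rw [hess_comm hψ2 _ w v, hess_comm hu _ q p]

end IntegrationByParts

section Dilation

theorem hasDerivAt_integral_of_isCompact {α : Type*} [TopologicalSpace α] [T2Space α]
    [MeasurableSpace α] [BorelSpace α] [SecondCountableTopologyEither α ℝ] {μ : Measure α}
    [IsFiniteMeasureOnCompacts μ] {F F' : ℝ → α → ℝ} {t : ℝ} {s : Set ℝ} {k : Set α}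
    (hs : IsCompact s) (hst : s ∈ 𝓝 t) (hk : IsCompact k) (hF : ∀ σ ∈ s, Continuous (F σ))
    (hFk : ∀ z ∉ k, F t z = 0) (hF' : ContinuousOn F'.uncurry (s ×ˢ univ))
    (hF'k : ∀ σ ∈ s, ∀ z ∉ k, F' σ z = 0)
    (hderiv : ∀ σ ∈ s, ∀ z, HasDerivAt (F · z) (F' σ z) σ) :
    HasDerivAt (fun σ => ∫ z, F σ z ∂μ) (∫ z, F' t z ∂μ) t := by
  have ht : t ∈ s := mem_of_mem_nhds hst
  obtain ⟨C, hC⟩ := (hs.prod hk).exists_bound_of_continuousOn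
    (hF'.mono (prod_mono_right (subset_univ k)))
  have hF't : Continuous (F' t) :=
    hF'.comp_continuous (f := fun z => (t, z)) (by fun_prop) fun z => ⟨ht, mem_univ z⟩
  refine (hasDerivAt_integral_of_dominated_loc_of_deriv_le (bound := k.indicator fun _ => C) hst
    (eventually_of_mem hst fun σ hσ => (hF σ hσ).aestronglyMeasurable)
    ((hF t ht).integrable_of_hasCompactSupport (HasCompactSupport.intro hk hFk))
    hF't.aestronglyMeasurable (.of_forall fun z σ hσ => ?_)
    ((integrable_indicator_iff hk.measurableSet).2 (integrableOn_const hk.measure_ne_top))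
    (.of_forall fun z σ hσ => hderiv σ hσ z)).2
  by_cases hz : z ∈ k
  · rw [indicator_of_mem hz]
    exact hC (σ, z) ⟨hσ, hz⟩
  · rw [indicator_of_notMem hz, hF'k σ hσ z hz, norm_zero]

variable {E : Type*} [NormedAddCommGroup E] [NormedSpace ℝ E] {φ g : E → ℝ} {t : ℝ}

/-- The divergence of the radial vector field `y ↦ φ y • y`. -/
def radialDiv (φ : E → ℝ) (y : E) : ℝ := fderiv ℝ φ y y + Module.finrank ℝ E * φ y

theorem continuous_radialDiv (hφ : ContDiff ℝ 1 φ) : Continuous (radialDiv φ) :=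
  ((hφ.continuous_fderiv one_ne_zero).clm_apply continuous_id).add
    (continuous_const.mul hφ.continuous)

theorem radialDiv_eq_zero_of_notMem_tsupport {y : E} (hy : y ∉ tsupport φ) :
    radialDiv φ y = 0 := by
  simp [radialDiv, fderiv_of_notMem_tsupport (𝕜 := ℝ) hy, image_eq_zero_of_notMem_tsupport hy]

theorem hasDerivAt_pow_mul_comp_smul (hφ : Differentiable ℝ φ) {σ : ℝ} (hσ : σ ≠ 0) (z : E) :
    HasDerivAt (fun σ => σ ^ Module.finrank ℝ E * φ (σ • z))
      (σ⁻¹ * (σ ^ Module.finrank ℝ E * radialDiv φ (σ • z))) σ := by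
  have hsmul : HasDerivAt (fun σ : ℝ => σ • z) z σ := by
    simpa using (hasDerivAt_id σ).smul_const z
  refine ((hasDerivAt_pow (Module.finrank ℝ E) σ).fun_mul
    ((hφ (σ • z)).hasFDerivAt.comp_hasDerivAt σ hsmul)).congr_deriv ?_
  simp only [radialDiv, map_smul, smul_eq_mul, Function.comp_apply]
  rcases Module.finrank ℝ E with _ | n
  · simp [hσ]
  · rw [Nat.add_sub_cancel]
    field_simp
    ring

variable [FiniteDimensional ℝ E] [MeasurableSpace E] [BorelSpace E] {μ : Measure E}
  [μ.IsAddHaarMeasure]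

theorem integral_mul_comp_smul (φ g : E → ℝ) (ht : 0 < t) :
    ∫ y, φ y * g (t • y) ∂μ = ∫ z, t⁻¹ ^ Module.finrank ℝ E * φ (t⁻¹ • z) * g z ∂μ := by
  have h := Measure.integral_comp_smul_of_nonneg μ (fun z => φ (t⁻¹ • z) * g z) t (hR := ht.le)
  simp only [inv_smul_smul₀ ht.ne'] at h
  rw [h, smul_eq_mul, ← integral_const_mul]
  simp only [inv_pow, mul_assoc]

theorem hasDerivAt_integral_pow_mul_comp_smul (hφ : ContDiff ℝ 1 φ) (hc : HasCompactSupport φ)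
    (hg : Continuous g) (ht : 0 < t) :
    HasDerivAt (fun σ => ∫ z, σ ^ Module.finrank ℝ E * φ (σ • z) * g z ∂μ)
      (∫ z, t⁻¹ * (t ^ Module.finrank ℝ E * radialDiv φ (t • z)) * g z ∂μ) t := by
  have hs : ∀ σ ∈ Icc (t / 2) (2 * t), 0 < σ := fun σ hσ => (half_pos ht).trans_le hσ.1
  obtain ⟨R, hR⟩ := hc.isBounded.subset_closedBall 0
  have hk : ∀ σ ∈ Icc (t / 2) (2 * t), ∀ z ∉ closedBall (0 : E) (R / (t / 2)),
      σ • z ∉ tsupport φ := by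
    intro σ hσ z hz hmem
    refine hz (mem_closedBall_zero_iff.2 ((le_div_iff₀' (half_pos ht)).2 ?_))
    have := mem_closedBall_zero_iff.1 (hR hmem)
    rw [norm_smul, Real.norm_of_nonneg (hs σ hσ).le] at this
    exact (mul_le_mul_of_nonneg_right hσ.1 (norm_nonneg z)).trans this
  have hmem : Icc (t / 2) (2 * t) ∈ 𝓝 t := Icc_mem_nhds (by linarith) (by linarith)
  have hφc := hφ.continuous
  have hdc := continuous_radialDiv hφ
  refine hasDerivAt_integral_of_isCompact isCompact_Icc hmem
    (isCompact_closedBall (0 : E) (R / (t / 2))) (fun σ _ => by fun_prop) (fun z hz => ?_)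
    (F' := fun σ z => σ⁻¹ * (σ ^ Module.finrank ℝ E * radialDiv φ (σ • z)) * g z) ?_
    (fun σ hσ z hz => ?_) fun σ hσ z =>
      (hasDerivAt_pow_mul_comp_smul (hφ.differentiable one_ne_zero) (hs σ hσ).ne' z).mul_const (g z)
  · simp [image_eq_zero_of_notMem_tsupport (hk t (mem_of_mem_nhds hmem) z hz)]
  · have hinv : ContinuousOn (fun p : ℝ × E => p.1⁻¹) (Icc (t / 2) (2 * t) ×ˢ univ) :=
      continuousOn_fst.inv₀ fun p hp => (hs p.1 hp.1).ne'
    exact (hinv.mul (by fun_prop)).mul (by fun_prop)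
  · simp [radialDiv_eq_zero_of_notMem_tsupport (hk σ hσ z hz)]

-- Changing variables moves the dilation onto `φ`, so `g` need not be differentiable.
theorem hasDerivAt_integral_mul_comp_smul (hφ : ContDiff ℝ 1 φ) (hc : HasCompactSupport φ)
    (hg : Continuous g) (ht : 0 < t) :
    HasDerivAt (fun t => ∫ y, φ y * g (t • y) ∂μ)
      (-(t⁻¹ * ∫ y, radialDiv φ y * g (t • y) ∂μ)) t := by
  have hcomp := (hasDerivAt_integral_pow_mul_comp_smul (μ := μ) hφ hc hg (inv_pos.2 ht)).comp t
    (hasDerivAt_inv ht.ne')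
  refine (hcomp.congr_of_eventuallyEq ?_).congr_deriv ?_
  · filter_upwards [lt_mem_nhds ht] with s hs using integral_mul_comp_smul φ g hs
  · simp_rw [integral_mul_comp_smul (radialDiv φ) g ht, mul_assoc t⁻¹⁻¹, integral_const_mul]
    field_simp

end Dilation

section RadialKernel

open InnerProductSpace Laplacian

theorem exists_contDiff_primitive {θ : ℝ → ℝ} (hθ : ContDiff ℝ ∞ θ) {b : ℝ}
    (hb : ∀ s, b ≤ s → θ s = 0) :
    ∃ Ψ : ℝ → ℝ, ContDiff ℝ ∞ Ψ ∧ (∀ s, HasDerivAt Ψ (θ s) s) ∧ ∀ s, b ≤ s → Ψ s = 0 := by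
  have hderiv (s : ℝ) : HasDerivAt (fun s => ∫ r in b..s, θ r) (θ s) s :=
    intervalIntegral.integral_hasDerivAt_right (hθ.continuous.intervalIntegrable _ _)
      hθ.continuous.stronglyMeasurable.stronglyMeasurableAtFilter hθ.continuous.continuousAt
  refine ⟨fun s => ∫ r in b..s, θ r, ?_, hderiv, fun s hs => ?_⟩
  · rw [contDiff_infty_iff_deriv, funext fun s => (hderiv s).deriv]
    exact ⟨fun s => (hderiv s).differentiableAt, hθ⟩
  · refine intervalIntegral.integral_zero_ae (.of_forall fun r hr => hb r ?_)
    rw [uIoc_of_le hs] at hr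
    exact hr.1.le

theorem tsupport_comp_norm_sq_subset_closedBall {E : Type*} [SeminormedAddGroup E]
    {θ : ℝ → ℝ} (hθ : ∀ s, 1 ≤ s → θ s = 0) :
    tsupport (fun y : E => θ (‖y‖ ^ 2)) ⊆ closedBall 0 1 := by
  refine closure_minimal (fun y hy => ?_) isClosed_closedBall
  by_contra hy'
  rw [mem_closedBall_zero_iff, not_le] at hy'
  exact hy (hθ _ (one_le_pow₀ hy'.le))

variable {E : Type*} [NormedAddCommGroup E] [InnerProductSpace ℝ E] [FiniteDimensional ℝ E]

theorem laplacian_eq_sum_hess {ι : Type*} [Fintype ι] (b : OrthonormalBasis ι ℝ E) (u : E → ℝ)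
    (x : E) : Δ u x = ∑ i, hess u x (b i) (b i) := by
  rw [laplacian_eq_iteratedFDeriv_orthonormalBasis u b]
  exact Finset.sum_congr rfl fun i _ => by rw [iteratedFDeriv_two_apply]; rfl

theorem laplacian_eq_radialDiv {φ ψ : E → ℝ} (hφ : Differentiable ℝ φ)
    (hψ : ∀ y, HasFDerivAt ψ (φ y • innerSL ℝ y) y) (y : E) : Δ ψ y = radialDiv φ y := by
  let b := stdOrthonormalBasis ℝ E
  have hinner : HasFDerivAt (fun z : E => innerSL ℝ z) (innerSL ℝ : E →L[ℝ] E →L[ℝ] ℝ) y :=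
    (innerSL ℝ : E →L[ℝ] E →L[ℝ] ℝ).hasFDerivAt
  have hhess := (hφ y).hasFDerivAt.fun_smul hinner
  rw [← funext fun z => (hψ z).fderiv] at hhess
  have hsum : ∑ i, fderiv ℝ φ y (b i) * inner ℝ y (b i) = fderiv ℝ φ y y := by
    have h := congrArg (fderiv ℝ φ y) (b.sum_repr' y)
    simpa [real_inner_comm, mul_comm] using h
  rw [laplacian_eq_sum_hess b, hess, hhess.fderiv, radialDiv, ← hsum]
  simp [Finset.sum_add_distrib, add_comm, innerSL_apply_apply ℝ]

variable [MeasurableSpace E] [BorelSpace E] (μ : Measure E) [μ.IsAddHaarMeasure]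

theorem exists_radial_kernel :
    ∃ φ ψ : E → ℝ, ContDiff ℝ ∞ φ ∧ ContDiff ℝ ∞ ψ ∧ tsupport φ ⊆ closedBall 0 1 ∧
      tsupport ψ ⊆ closedBall 0 1 ∧ 0 < ∫ y, φ y ∂μ ∧ ∀ y, Δ ψ y = radialDiv φ y := by
  let θ : ContDiffBump (0 : ℝ) := ⟨2⁻¹, 1, by norm_num, by norm_num⟩
  have hθ1 : ∀ s, 1 ≤ s → θ s = 0 := fun s hs =>
    θ.zero_of_le_dist (by rwa [Real.dist_0_eq_abs, abs_of_nonneg (by linarith)])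
  obtain ⟨Ψ, hΨ, hΨ', hΨ1⟩ := exists_contDiff_primitive θ.contDiff hθ1
  have hφ : ContDiff ℝ ∞ fun y : E => θ (‖y‖ ^ 2) := θ.contDiff.comp (contDiff_norm_sq ℝ)
  have hφsupp := tsupport_comp_norm_sq_subset_closedBall (E := E) hθ1
  refine ⟨fun y => θ (‖y‖ ^ 2), fun y => 2⁻¹ * Ψ (‖y‖ ^ 2), hφ,
    contDiff_const.mul (hΨ.comp (contDiff_norm_sq ℝ)), hφsupp, ?_, ?_, ?_⟩
  · exact tsupport_comp_norm_sq_subset_closedBall (θ := fun s => 2⁻¹ * Ψ s)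
      fun s hs => by rw [hΨ1 s hs, mul_zero]
  · exact hφ.continuous.integral_pos_of_hasCompactSupport_nonneg_nonzero
      (HasCompactSupport.of_support_subset_isCompact (isCompact_closedBall 0 1)
        ((subset_tsupport _).trans hφsupp)) (fun y => θ.nonneg) (x := 0)
      (by simpa using (θ.pos_of_mem_ball (mem_ball_self one_pos)).ne')
  · refine laplacian_eq_radialDiv (hφ.differentiable (by simp)) fun y => ?_
    refine (((hΨ' _).comp_hasFDerivAt y (hasFDerivAt_id y).norm_sq).const_mul 2⁻¹).congr_fderiv ?_
    ext v
    simp only [id_eq, ContinuousLinearMap.comp_id, smul_apply, coe_innerSL_apply, nsmul_eq_mul,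
      Nat.cast_ofNat, smul_eq_mul]
    ring

end RadialKernel

/-- The interior second-derivative estimate at the centre of a ball, with constant `C`, for the
constant-coefficient operator `u ↦ 𝒜 (hess u)`, whose value is compared with a constant `c` at a
Lipschitz rate `H`. -/
def HessianEstimate {E : Type*} [NormedAddCommGroup E] [NormedSpace ℝ E]
    (𝒜 : (E →L[ℝ] E →L[ℝ] ℝ) → ℝ) (C : ℝ) : Prop :=
  ∀ ⦃u : E → ℝ⦄, ContDiff ℝ 2 u → ∀ ⦃x : E⦄ ⦃ρ S H c : ℝ⦄, 0 < ρ → 0 ≤ H →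
    (∀ y ∈ closedBall x ρ, |u y| ≤ S) →
    (∀ y ∈ closedBall x ρ, |𝒜 (hess u y) - c| ≤ H * ‖y - x‖) →
    ‖hess u x‖ ≤ C * (S / ρ ^ 2 + H * ρ)

theorem add_smul_mem_closedBall {E : Type*} [NormedAddCommGroup E] [NormedSpace ℝ E] (x : E)
    {t : ℝ} (ht : 0 ≤ t) {y : E} (hy : y ∈ closedBall (0 : E) 1) : x + t • y ∈ closedBall x t := by
  rw [mem_closedBall_zero_iff] at hy
  simpa [norm_smul, abs_of_nonneg ht] using mul_le_of_le_one_right ht hy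

theorem abs_sub_le_mul_of_hasDerivAt_Ioo {f f' : ℝ → ℝ} {a b D : ℝ} (hab : a < b)
    (hf : ContinuousOn f (Icc a b)) (hf' : ∀ t ∈ Ioo a b, HasDerivAt f (f' t) t)
    (hD : ∀ t ∈ Ioo a b, |f' t| ≤ D) : |f b - f a| ≤ D * (b - a) := by
  obtain ⟨t, ht, hslope⟩ := exists_hasDerivAt_eq_slope f f' hab hf hf'
  rw [← div_le_iff₀ (sub_pos.2 hab), ← abs_of_pos (sub_pos.2 hab), ← abs_div, ← hslope]
  exact hD t ht

section IntegralHessMul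

variable {E : Type*} [NormedAddCommGroup E] [NormedSpace ℝ E] [MeasurableSpace E]
  {μ : Measure E} {g ψ : E → ℝ}

theorem integrable_hess_apply_mul [BorelSpace E] [IsFiniteMeasureOnCompacts μ]
    (hψ : ContDiff ℝ 2 ψ) (hc : HasCompactSupport ψ) (hg : Continuous g) (v w : E) :
    Integrable (fun y => hess ψ y v w * g y) μ :=
  ((continuous_hess_apply hψ v w).mul hg).integrable_of_hasCompactSupport
    (hasCompactSupport_hess_apply hc v w).mul_right

variable [FiniteDimensional ℝ E]

theorem exists_abs_integral_hess_mul_le [IsFiniteMeasureOnCompacts μ] (hψ : ContDiff ℝ 2 ψ)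
    (hsupp : tsupport ψ ⊆ closedBall 0 1) :
    ∃ C, 0 ≤ C ∧ ∀ ⦃g : E → ℝ⦄ ⦃B : ℝ⦄, (∀ y ∈ closedBall (0 : E) 1, |g y| ≤ B) →
      ∀ v w, |∫ y, hess ψ y v w * g y ∂μ| ≤ C * (‖v‖ * ‖w‖ * B) := by
  have hK : IsCompact (closedBall (0 : E) 1) := isCompact_closedBall 0 1
  obtain ⟨N, hN⟩ := hK.exists_bound_of_continuousOn (f := hess ψ)
    (continuous_hess hψ).continuousOn
  have hN0 : 0 ≤ N := (norm_nonneg (hess ψ 0)).trans (hN 0 (mem_closedBall_self zero_le_one))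
  refine ⟨N * μ.real (closedBall 0 1), by positivity, fun g B hg v w => ?_⟩
  have hbound : ∀ y ∈ closedBall (0 : E) 1, ‖hess ψ y v w * g y‖ ≤ N * ‖v‖ * ‖w‖ * B :=
    fun y hy => by
      rw [norm_mul]
      exact mul_le_mul (ContinuousLinearMap.le_of_opNorm₂_le_of_le _ (hN y hy) le_rfl le_rfl)
        (hg y hy) (norm_nonneg _) (by positivity)
  have hzero : ∀ y ∉ closedBall (0 : E) 1, hess ψ y v w * g y = 0 := fun y hy => by
    have hess_zero : hess ψ y = 0 := image_eq_zero_of_notMem_tsupport fun h =>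
      hy (hsupp (tsupport_fderiv_subset ℝ (tsupport_fderiv_subset ℝ h)))
    rw [hess_zero, zero_apply, zero_apply, zero_mul]
  rw [← setIntegral_eq_integral_of_forall_compl_eq_zero hzero, ← Real.norm_eq_abs]
  calc _ ≤ N * ‖v‖ * ‖w‖ * B * μ.real (closedBall 0 1) :=
        norm_setIntegral_le_of_norm_le_const hK.measure_lt_top hbound
    _ = _ := by ring

theorem integral_hess_mul_sub_const [BorelSpace E] [μ.IsAddHaarMeasure] (hψ : ContDiff ℝ 2 ψ)
    (hc : HasCompactSupport ψ) (hg : Continuous g) (v w : E) (c : ℝ) :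
    ∫ y, hess ψ y v w * (g y - c) ∂μ = ∫ y, hess ψ y v w * g y ∂μ := by
  simp_rw [mul_sub]
  rw [integral_sub (integrable_hess_apply_mul hψ hc hg v w)
    (integrable_hess_apply_mul hψ hc continuous_const v w), integral_mul_const,
    integral_hess_eq_zero hψ hc, zero_mul, sub_zero]

end IntegralHessMul

section LaplacianEstimate

open InnerProductSpace Laplacian

variable {E : Type*} [NormedAddCommGroup E] [InnerProductSpace ℝ E] [FiniteDimensional ℝ E]
  {φ ψ u : E → ℝ}

theorem continuous_laplacian (hu : ContDiff ℝ 2 u) : Continuous (Δ u) := by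
  rw [funext (laplacian_eq_sum_hess (stdOrthonormalBasis ℝ E) u)]
  exact continuous_finsetSum _ fun i _ => continuous_hess_apply hu _ _

theorem laplacian_comp_add_smul (hu : ContDiff ℝ 2 u) (x : E) (t : ℝ) (y : E) :
    Δ (fun z => u (x + t • z)) y = t ^ 2 * Δ u (x + t • y) := by
  simp [laplacian_eq_sum_hess (stdOrthonormalBasis ℝ E), hess_comp_add_smul hu, Finset.mul_sum]

variable [MeasurableSpace E] [BorelSpace E] {μ : Measure E} [μ.IsAddHaarMeasure]

theorem integral_laplacian_mul_hess (hψ : ContDiff ℝ 3 ψ) (hc : HasCompactSupport ψ)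
    (hu : ContDiff ℝ 2 u) (v w : E) :
    ∫ y, Δ ψ y * hess u y v w ∂μ = ∫ y, hess ψ y v w * Δ u y ∂μ := by
  have hint (p q r s : E) : Integrable (fun y => hess ψ y p q * hess u y r s) μ :=
    integrable_hess_apply_mul (hψ.of_le (by norm_num)) hc (continuous_hess_apply hu r s) p q
  simp_rw [laplacian_eq_sum_hess (stdOrthonormalBasis ℝ E), Finset.sum_mul, Finset.mul_sum]
  rw [integral_finsetSum _ fun i _ => hint _ _ _ _, integral_finsetSum _ fun i _ => hint _ _ _ _]
  exact Finset.sum_congr rfl fun i _ => integral_hess_mul_hess_comm hψ hc hu _ _ _ _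

theorem integral_laplacian_mul_hess_comp_add_smul (hψ : ContDiff ℝ 3 ψ) (hc : HasCompactSupport ψ)
    (hu : ContDiff ℝ 2 u) (x v w : E) {t : ℝ} (ht : t ≠ 0) :
    ∫ y, Δ ψ y * hess u (x + t • y) v w ∂μ = ∫ y, hess ψ y v w * Δ u (x + t • y) ∂μ := by
  have hU : ContDiff ℝ 2 fun z => u (x + t • z) := by fun_prop
  have h := integral_laplacian_mul_hess (μ := μ) hψ hc hU v w
  simp_rw [hess_comp_add_smul hu, laplacian_comp_add_smul hu, smul_apply, smul_eq_mul,
    mul_left_comm _ (t ^ 2), integral_const_mul] at h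
  exact mul_left_cancel₀ (pow_ne_zero 2 ht) h

theorem exists_abs_integral_mul_hess_le (hφ : ContDiff ℝ 2 φ)
    (hsupp : tsupport φ ⊆ closedBall 0 1) :
    ∃ C, 0 ≤ C ∧ ∀ ⦃u : E → ℝ⦄, ContDiff ℝ 2 u → ∀ ⦃x : E⦄ ⦃ρ S : ℝ⦄, 0 < ρ →
      (∀ y ∈ closedBall x ρ, |u y| ≤ S) →
      ∀ v w, |∫ y, φ y * hess u (x + ρ • y) v w ∂μ| ≤ C * (‖v‖ * ‖w‖ * (S / ρ ^ 2)) := by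
  obtain ⟨C, hC, hbound⟩ := exists_abs_integral_hess_mul_le (μ := μ) hφ hsupp
  refine ⟨C, hC, fun u hu x ρ S hρ hS v w => ?_⟩
  have hU : ContDiff ℝ 2 fun z => u (x + ρ • z) := by fun_prop
  have hc : HasCompactSupport φ :=
    (isCompact_closedBall 0 1).of_isClosed_subset (isClosed_tsupport φ) hsupp
  have hparts := integral_hess_mul (μ := μ) hφ hc hU v w
  simp_rw [hess_comp_add_smul hu, smul_apply, smul_eq_mul, mul_left_comm _ (ρ ^ 2),
    integral_const_mul] at hparts
  have hle := hbound (fun y hy => hS _ (add_smul_mem_closedBall x hρ.le hy)) v w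
  rw [hparts, abs_mul, abs_of_pos (by positivity), ← le_div_iff₀' (by positivity)] at hle
  exact hle.trans_eq (by ring)

theorem exists_abs_integral_laplacian_mul_hess_le (hψ : ContDiff ℝ 3 ψ)
    (hsupp : tsupport ψ ⊆ closedBall 0 1) :
    ∃ C, 0 ≤ C ∧ ∀ ⦃u : E → ℝ⦄, ContDiff ℝ 2 u → ∀ ⦃x : E⦄ ⦃t H c : ℝ⦄, 0 < t → 0 ≤ H →
      (∀ y ∈ closedBall x t, |Δ u y - c| ≤ H * ‖y - x‖) →
      ∀ v w, |t⁻¹ * ∫ y, Δ ψ y * hess u (x + t • y) v w ∂μ| ≤ C * (‖v‖ * ‖w‖ * H) := by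
  have hψ2 : ContDiff ℝ 2 ψ := hψ.of_le (by norm_num)
  obtain ⟨C, hC, hbound⟩ := exists_abs_integral_hess_mul_le (μ := μ) hψ2 hsupp
  refine ⟨C, hC, fun u hu x t H c ht hH hΔ v w => ?_⟩
  have hc : HasCompactSupport ψ :=
    (isCompact_closedBall 0 1).of_isClosed_subset (isClosed_tsupport ψ) hsupp
  have hΔt : ∀ y ∈ closedBall (0 : E) 1, |Δ u (x + t • y) - c| ≤ H * t := fun y hy => by
    have hmem := add_smul_mem_closedBall x ht.le hy
    exact (hΔ _ hmem).trans (mul_le_mul_of_nonneg_left (mem_closedBall_iff_norm.1 hmem) hH)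
  have hle := hbound hΔt v w
  have hcont : Continuous fun y => Δ u (x + t • y) := (continuous_laplacian hu).comp (by fun_prop)
  rw [integral_hess_mul_sub_const hψ2 hc hcont,
    ← integral_laplacian_mul_hess_comp_add_smul hψ hc hu x v w ht.ne'] at hle
  rw [abs_mul, abs_of_pos (inv_pos.2 ht), inv_mul_le_iff₀ ht]
  exact hle.trans_eq (by ring)

theorem continuous_integral_mul_hess_apply (hφ : Continuous φ) (hsupp : tsupport φ ⊆ closedBall 0 1)
    (hu : ContDiff ℝ 2 u) (x v w : E) :
    Continuous fun t : ℝ => ∫ y, φ y * hess u (x + t • y) v w ∂μ := by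
  have hzero (t : ℝ) : ∀ y ∉ closedBall (0 : E) 1, φ y * hess u (x + t • y) v w = 0 := by
    intro y hy
    rw [image_eq_zero_of_notMem_tsupport fun h => hy (hsupp h), zero_mul]
  rw [funext fun t => (setIntegral_eq_integral_of_forall_compl_eq_zero (μ := μ) (hzero t)).symm]
  exact continuous_parametric_integral_of_continuous ((hφ.comp continuous_snd).mul
    ((continuous_hess_apply hu v w).comp (by fun_prop))) (isCompact_closedBall 0 1)

-- The `t`-derivative of the mean over the ball of radius `t` is a mean against a Laplacian.
theorem exists_abs_integral_mul_hess_sub_le (hφ : ContDiff ℝ 1 φ)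
    (hφsupp : tsupport φ ⊆ closedBall 0 1) (hψ : ContDiff ℝ 3 ψ)
    (hψsupp : tsupport ψ ⊆ closedBall 0 1) (hΔψ : ∀ y, Δ ψ y = radialDiv φ y) :
    ∃ C, 0 ≤ C ∧ ∀ ⦃u : E → ℝ⦄, ContDiff ℝ 2 u → ∀ ⦃x : E⦄ ⦃ρ H c : ℝ⦄, 0 < ρ → 0 ≤ H →
      (∀ y ∈ closedBall x ρ, |Δ u y - c| ≤ H * ‖y - x‖) →
      ∀ v w, |∫ y, φ y * hess u (x + ρ • y) v w ∂μ - (∫ y, φ y ∂μ) * hess u x v w| ≤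
        C * (‖v‖ * ‖w‖ * (H * ρ)) := by
  obtain ⟨C, hC, hbound⟩ := exists_abs_integral_laplacian_mul_hess_le (μ := μ) hψ hψsupp
  refine ⟨C, hC, fun u hu x ρ H c hρ hH hΔ v w => ?_⟩
  have hφc : HasCompactSupport φ :=
    (isCompact_closedBall 0 1).of_isClosed_subset (isClosed_tsupport φ) hφsupp
  have hderiv : ∀ t ∈ Ioo 0 ρ, HasDerivAt (fun t => ∫ y, φ y * hess u (x + t • y) v w ∂μ)
      (-(t⁻¹ * ∫ y, Δ ψ y * hess u (x + t • y) v w ∂μ)) t := fun t ht => by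
    simp_rw [hΔψ]
    exact hasDerivAt_integral_mul_comp_smul (g := fun z => hess u (x + z) v w) hφ hφc
      ((continuous_hess_apply hu v w).comp (by fun_prop)) ht.1
  have hsub := abs_sub_le_mul_of_hasDerivAt_Ioo hρ
    (continuous_integral_mul_hess_apply hφ.continuous hφsupp hu x v w).continuousOn hderiv
    fun t ht => (abs_neg _).trans_le (hbound hu ht.1 hH
      (fun y hy => hΔ y (closedBall_subset_closedBall ht.2.le hy)) v w)
  simp only [zero_smul, add_zero, integral_mul_const, sub_zero] at hsub
  exact hsub.trans_eq (by ring)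

theorem exists_hessianEstimate_laplacian {ι : Type*} [Fintype ι] (b : OrthonormalBasis ι ℝ E) :
    ∃ C, 0 ≤ C ∧ HessianEstimate (fun B : E →L[ℝ] E →L[ℝ] ℝ => ∑ i, B (b i) (b i)) C := by
  borelize E
  let μ : Measure E := Measure.addHaar
  obtain ⟨φ, ψ, hφ, hψ, hφsupp, hψsupp, hφpos, hΔψ⟩ := exists_radial_kernel μ
  set m : ℝ := ∫ y, φ y ∂μ
  obtain ⟨C₀, hC₀, hmean⟩ :=
    exists_abs_integral_mul_hess_le (μ := μ) (contDiff_infty.1 hφ 2) hφsupp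
  obtain ⟨C₁, hC₁, hdiff⟩ := exists_abs_integral_mul_hess_sub_le (μ := μ)
    (contDiff_infty.1 hφ 1) hφsupp (contDiff_infty.1 hψ 3) hψsupp hΔψ
  refine ⟨(C₀ + C₁) / m, by positivity, fun u hu x ρ S H c hρ hH hS hΔ => ?_⟩
  have hS0 : 0 ≤ S := (abs_nonneg _).trans (hS x (mem_closedBall_self hρ.le))
  simp_rw [← laplacian_eq_sum_hess b] at hΔ
  refine ContinuousLinearMap.opNorm_le_bound₂ _ (by positivity) fun v w => ?_
  have hcross : 0 ≤ (C₀ * (H * ρ) + C₁ * (S / ρ ^ 2)) * (‖v‖ * ‖w‖) := by positivity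
  calc ‖hess u x v w‖ = |m * hess u x v w| / m := by
        rw [abs_mul, abs_of_pos hφpos, mul_div_cancel_left₀ _ hφpos.ne', Real.norm_eq_abs]
    _ ≤ (C₀ * (‖v‖ * ‖w‖ * (S / ρ ^ 2)) + C₁ * (‖v‖ * ‖w‖ * (H * ρ))) / m := by
        gcongr
        refine (norm_le_norm_add_norm_sub (∫ y, φ y * hess u (x + ρ • y) v w ∂μ) _).trans ?_
        exact add_le_add (hmean hu hρ hS v w) (hdiff hu hρ hH hΔ v w)
    _ ≤ ((C₀ + C₁) * (S / ρ ^ 2 + H * ρ) * (‖v‖ * ‖w‖)) / m := by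
        gcongr
        linarith
    _ = _ := by ring

end LaplacianEstimate

section LinearChange

variable {E F : Type*} [NormedAddCommGroup E] [NormedSpace ℝ E] [NormedAddCommGroup F]
  [NormedSpace ℝ F]

theorem HessianEstimate.of_bilinearComp {𝒜 : (E →L[ℝ] E →L[ℝ] ℝ) → ℝ}
    {ℬ : (F →L[ℝ] F →L[ℝ] ℝ) → ℝ} {C m k : ℝ} (hℬ : HessianEstimate ℬ C) (hC : 0 ≤ C)
    (T : F →L[ℝ] E) (R : E →L[ℝ] F) (hTR : ∀ y, T (R y) = y) (hm : 0 < m) (hT : ‖T‖ ≤ m)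
    (hR : ‖R‖ ≤ k) (h𝒜 : ∀ B, (∀ v w, B v w = B w v) → ℬ (B.bilinearComp T T) = 𝒜 B) :
    HessianEstimate 𝒜 (C * k ^ 2 * (m ^ 2 + 1)) := by
  intro u hu x ρ S H c hρ hH hS hc
  have hS0 : 0 ≤ S := (abs_nonneg _).trans (hS x (mem_closedBall_self hρ.le))
  have hTz (z : F) : ‖T z‖ ≤ m * ‖z‖ := T.le_of_opNorm_le hT z
  have hmem : ∀ z ∈ closedBall (0 : F) (ρ / m), x + T z ∈ closedBall x ρ := fun z hz => by
    rw [mem_closedBall_zero_iff, le_div_iff₀' hm] at hz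
    rw [mem_closedBall_iff_norm, add_sub_cancel_left]
    exact (hTz z).trans hz
  have hpull := hess_comp_add_clm hu x T
  have hest := hℬ (contDiff_comp_add_clm hu x T) (x := 0) (c := c) (div_pos hρ hm)
    (mul_nonneg hH hm.le) (fun z hz => hS _ (hmem z hz)) fun z hz => by
      rw [hpull, h𝒜 _ (hess_comm hu _), sub_zero, mul_assoc]
      refine (hc _ (hmem z hz)).trans (mul_le_mul_of_nonneg_left ?_ hH)
      rw [add_sub_cancel_left]
      exact hTz z
  refine ContinuousLinearMap.opNorm_le_bound₂ _ (by positivity) fun v w => ?_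
  have hRv (v : E) : ‖R v‖ ≤ k * ‖v‖ := R.le_of_opNorm_le hR v
  calc ‖hess u x v w‖ = ‖hess (fun z => u (x + T z)) 0 (R v) (R w)‖ := by simp [hpull, hTR]
    _ ≤ C * (S / (ρ / m) ^ 2 + H * m * (ρ / m)) * (k * ‖v‖) * (k * ‖w‖) :=
        ContinuousLinearMap.le_of_opNorm₂_le_of_le _ hest (hRv v) (hRv w)
    _ = C * k ^ 2 * (m ^ 2 * (S / ρ ^ 2) + H * ρ) * ‖v‖ * ‖w‖ := by field_simp
    _ ≤ C * k ^ 2 * ((m ^ 2 + 1) * (S / ρ ^ 2 + H * ρ)) * ‖v‖ * ‖w‖ := by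
        gcongr
        have : 0 ≤ S / ρ ^ 2 + m ^ 2 * (H * ρ) := by positivity
        linarith
    _ = _ := by ring

theorem exists_rightInverse_norm_le [FiniteDimensional ℝ E] (T : E →L[ℝ] E) {k : ℝ} (hk : 0 ≤ k)
    (hT : ∀ x, ‖x‖ ≤ k * ‖T x‖) : ∃ R : E →L[ℝ] E, (∀ y, T (R y) = y) ∧ ‖R‖ ≤ k := by
  have hinj : Function.Injective (T : E →ₗ[ℝ] E) :=
    (injective_iff_map_eq_zero (T : E →ₗ[ℝ] E)).2 fun x hx => by
      have h := hT x
      rw [show T x = 0 from hx, norm_zero, mul_zero] at h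
      exact norm_le_zero_iff.1 h
  let e := LinearEquiv.ofInjectiveEndo (T : E →ₗ[ℝ] E) hinj
  have hright (y : E) : T (e.symm y) = y := e.apply_symm_apply y
  refine ⟨LinearMap.toContinuousLinearMap (e.symm : E →ₗ[ℝ] E), hright,
    ContinuousLinearMap.opNorm_le_bound _ hk fun y => ?_⟩
  exact (hT (e.symm y)).trans_eq (by rw [hright])

end LinearChange

section HessPairing

open scoped MatrixOrder Matrix

variable {ι : Type*} [Fintype ι] {A : Matrix ι ι ℝ}

theorem dotProduct_symmPart_mulVec (A : Matrix ι ι ℝ) (ξ : ι → ℝ) :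
    ξ ⬝ᵥ ((2⁻¹ : ℝ) • (A + Aᵀ)) *ᵥ ξ = ξ ⬝ᵥ A *ᵥ ξ := by
  rw [Matrix.smul_mulVec, Matrix.add_mulVec, Matrix.mulVec_transpose, dotProduct_smul,
    dotProduct_add, dotProduct_comm ξ (ξ ᵥ* A), ← Matrix.dotProduct_mulVec, smul_eq_mul]
  ring

theorem dotProduct_mulVec_le {L : ℝ} (hA : ∑ i, ∑ j, |A i j| ≤ L) (ξ : EuclideanSpace ℝ ι) :
    ξ.ofLp ⬝ᵥ A *ᵥ ξ.ofLp ≤ L * ‖ξ‖ ^ 2 := by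
  refine le_trans ?_ (mul_le_mul_of_nonneg_right hA (sq_nonneg ‖ξ‖))
  simp_rw [dotProduct, Matrix.mulVec, dotProduct, Finset.sum_mul, Finset.mul_sum]
  refine Finset.sum_le_sum fun i _ => Finset.sum_le_sum fun j _ => ?_
  calc ξ i * (A i j * ξ j) ≤ |ξ i * (A i j * ξ j)| := le_abs_self _
    _ = |A i j| * (‖ξ i‖ * ‖ξ j‖) := by simp only [abs_mul, Real.norm_eq_abs]; ring
    _ ≤ |A i j| * (‖ξ‖ * ‖ξ‖) := by gcongr <;> exact PiLp.norm_apply_le ξ _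
    _ = |A i j| * ‖ξ‖ ^ 2 := by rw [sq]

theorem exists_isSymm_mul_transpose_eq (hA : ∀ ξ : ι → ℝ, 0 ≤ ξ ⬝ᵥ A *ᵥ ξ) :
    ∃ S : Matrix ι ι ℝ, S.IsSymm ∧ S * Sᵀ = (2⁻¹ : ℝ) • (A + Aᵀ) := by
  classical
  have hpos : ((2⁻¹ : ℝ) • (A + Aᵀ)).PosSemidef := by
    refine .of_dotProduct_mulVec_nonneg ?_ fun ξ => ?_
    · rw [Matrix.IsHermitian, Matrix.conjTranspose_eq_transpose_of_trivial]
      simp [add_comm]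
    · rw [star_trivial, dotProduct_symmPart_mulVec]
      exact hA ξ
  have hsqrt : (CFC.sqrt ((2⁻¹ : ℝ) • (A + Aᵀ))).PosSemidef :=
    Matrix.nonneg_iff_posSemidef.1 (CFC.sqrt_nonneg _)
  have hsymm : (CFC.sqrt ((2⁻¹ : ℝ) • (A + Aᵀ))).IsSymm := by
    rw [Matrix.IsSymm, ← Matrix.conjTranspose_eq_transpose_of_trivial, hsqrt.isHermitian.eq]
  refine ⟨_, hsymm, ?_⟩
  rw [hsymm.eq, CFC.sqrt_mul_sqrt_self _ (Matrix.nonneg_iff_posSemidef.2 hpos)]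

variable [DecidableEq ι]

/-- The principal part `∑ aⁱʲ ∂ᵢ∂ⱼ` of a second-order operator, acting on a Hessian `B`. -/
def hessPairing (A : Matrix ι ι ℝ)
    (B : EuclideanSpace ℝ ι →L[ℝ] EuclideanSpace ℝ ι →L[ℝ] ℝ) : ℝ :=
  ∑ i, ∑ j, A i j * B (EuclideanSpace.single i 1) (EuclideanSpace.single j 1)

variable {B : EuclideanSpace ℝ ι →L[ℝ] EuclideanSpace ℝ ι →L[ℝ] ℝ}

theorem hessPairing_sub (A A' : Matrix ι ι ℝ)
    (B : EuclideanSpace ℝ ι →L[ℝ] EuclideanSpace ℝ ι →L[ℝ] ℝ) :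
    hessPairing (A - A') B = hessPairing A B - hessPairing A' B := by
  simp [hessPairing, sub_mul]

theorem abs_hessPairing_le {L : ℝ} (hA : ∑ i, ∑ j, |A i j| ≤ L) : |hessPairing A B| ≤ L * ‖B‖ := by
  refine le_trans ?_ (mul_le_mul_of_nonneg_right hA (norm_nonneg B))
  simp_rw [hessPairing, Finset.sum_mul]
  refine (Finset.abs_sum_le_sum_abs _ _).trans (Finset.sum_le_sum fun i _ => ?_)
  refine (Finset.abs_sum_le_sum_abs _ _).trans (Finset.sum_le_sum fun j _ => ?_)
  rw [abs_mul]
  gcongr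
  simpa using B.le_opNorm₂ (EuclideanSpace.single i 1) (EuclideanSpace.single j 1)

theorem hessPairing_symmPart (hB : ∀ v w, B v w = B w v) :
    hessPairing ((2⁻¹ : ℝ) • (A + Aᵀ)) B = hessPairing A B := by
  have htranspose : hessPairing Aᵀ B = hessPairing A B := by
    rw [hessPairing, Finset.sum_comm]
    exact Finset.sum_congr rfl fun i _ => Finset.sum_congr rfl fun j _ => by
      rw [Matrix.transpose_apply, hB]
  calc hessPairing ((2⁻¹ : ℝ) • (A + Aᵀ)) B = 2⁻¹ * (hessPairing A B + hessPairing Aᵀ B) := by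
        simp only [hessPairing, Matrix.smul_apply, Matrix.add_apply, smul_eq_mul, mul_add, add_mul,
          Finset.sum_add_distrib, Finset.mul_sum, mul_assoc]
    _ = hessPairing A B := by rw [htranspose]; ring

theorem hessPairing_mul_transpose (S : Matrix ι ι ℝ)
    (B : EuclideanSpace ℝ ι →L[ℝ] EuclideanSpace ℝ ι →L[ℝ] ℝ) :
    hessPairing (S * Sᵀ) B = ∑ k, B.bilinearComp (Matrix.toEuclideanCLM (𝕜 := ℝ) S)
      (Matrix.toEuclideanCLM (𝕜 := ℝ) S) (EuclideanSpace.basisFun ι ℝ k)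
      (EuclideanSpace.basisFun ι ℝ k) := by
  have hcol (k : ι) : Matrix.toEuclideanCLM (𝕜 := ℝ) S (EuclideanSpace.basisFun ι ℝ k) =
      ∑ i, S i k • EuclideanSpace.single i (1 : ℝ) := by
    ext j
    simp [Matrix.ofLp_toEuclideanCLM, Pi.single_apply]
  simp only [hessPairing, Matrix.mul_apply, Matrix.transpose_apply,
    ContinuousLinearMap.bilinearComp_apply, hcol, map_sum, map_smul, sum_apply, smul_apply,
    smul_eq_mul, Finset.sum_mul, Finset.mul_sum]
  rw [Finset.sum_comm, eq_comm, Finset.sum_comm]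
  refine Finset.sum_congr rfl fun j _ => ?_
  rw [Finset.sum_comm]
  exact Finset.sum_congr rfl fun i _ => Finset.sum_congr rfl fun k _ => by ring

theorem norm_toEuclideanCLM_sq {S : Matrix ι ι ℝ} (hS : S.IsSymm)
    (hSA : S * Sᵀ = (2⁻¹ : ℝ) • (A + Aᵀ)) (ξ : EuclideanSpace ℝ ι) :
    ‖Matrix.toEuclideanCLM (𝕜 := ℝ) S ξ‖ ^ 2 = ξ.ofLp ⬝ᵥ A *ᵥ ξ.ofLp := by
  rw [← real_inner_self_eq_norm_sq, Matrix.inner_toEuclideanCLM, Matrix.ofLp_toEuclideanCLM,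
    ← dotProduct_symmPart_mulVec, ← hSA, hS.eq, ← Matrix.mulVec_mulVec,
    Matrix.dotProduct_mulVec ξ.ofLp, ← Matrix.mulVec_transpose, hS.eq]

-- Conjugating by the square root of the symmetric part of `A` reduces to the Laplacian.
theorem exists_hessianEstimate_hessPairing (ι : Type*) [Fintype ι] [DecidableEq ι] {lam : ℝ}
    (hlam : 0 < lam) (L : ℝ) :
    ∃ C, 0 ≤ C ∧ ∀ A : Matrix ι ι ℝ,
      (∀ ξ : EuclideanSpace ℝ ι, lam * ‖ξ‖ ^ 2 ≤ ξ.ofLp ⬝ᵥ A *ᵥ ξ.ofLp) →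
      ∑ i, ∑ j, |A i j| ≤ L → HessianEstimate (hessPairing A) C := by
  obtain ⟨C, hC, hlap⟩ := exists_hessianEstimate_laplacian (EuclideanSpace.basisFun ι ℝ)
  set m := √(max L 1)
  have hm : 0 < m := by positivity
  refine ⟨C * (√lam)⁻¹ ^ 2 * (m ^ 2 + 1), by positivity, fun A hA hL => ?_⟩
  obtain ⟨S, hS, hSA⟩ := exists_isSymm_mul_transpose_eq fun ξ : ι → ℝ =>
    (by positivity : (0 : ℝ) ≤ _).trans (hA (WithLp.toLp 2 ξ))
  have hnorm := norm_toEuclideanCLM_sq hS hSA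
  obtain ⟨R, hTR, hR⟩ := exists_rightInverse_norm_le (Matrix.toEuclideanCLM (𝕜 := ℝ) S)
    (k := (√lam)⁻¹) (by positivity) fun ξ => by
      rw [le_inv_mul_iff₀ (by positivity)]
      refine le_of_sq_le_sq ?_ (norm_nonneg _)
      rw [hnorm, mul_pow, Real.sq_sqrt hlam.le]
      exact hA ξ
  refine hlap.of_bilinearComp hC _ R hTR hm ?_ hR fun B hB => ?_
  · refine ContinuousLinearMap.opNorm_le_bound _ hm.le fun ξ =>
      le_of_sq_le_sq ?_ (by positivity)
    rw [hnorm, mul_pow, Real.sq_sqrt (by positivity)]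
    exact dotProduct_mulVec_le (hL.trans (le_max_left _ _)) ξ
  · rw [← hessPairing_mul_transpose, hSA, hessPairing_symmPart hB]

end HessPairing

section Absorption

theorem sq_mul_le_of_forall_ball {E : Type*} [PseudoMetricSpace E] [ProperSpace E] {g : E → ℝ}
    (hg : Continuous g) (hg0 : ∀ y, 0 ≤ g y) {x₀ : E} {r P : ℝ} (hr : 0 ≤ r) (hP : 0 ≤ P)
    (h : ∀ ⦃x : E⦄ ⦃d N : ℝ⦄, 0 < d → dist x x₀ + d ≤ r → (∀ y ∈ closedBall x (d / 2), g y ≤ N) →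
      d ^ 2 * g x ≤ P + d ^ 2 * N / 8) {x : E} (hx : x ∈ closedBall x₀ r) :
    (r - dist x x₀) ^ 2 * g x ≤ 2 * P := by
  have hcont : Continuous fun y => (r - dist y x₀) ^ 2 * g y := by fun_prop
  obtain ⟨z, hz, hmax⟩ := (isCompact_closedBall x₀ r).exists_isMaxOn
    ⟨x₀, mem_closedBall_self hr⟩ hcont.continuousOn
  refine (hmax hx).trans ?_
  obtain hd | hd := (sub_nonneg.2 (mem_closedBall.1 hz)).eq_or_lt
  · simpa [← hd] using hP
  set d := r - dist z x₀ with hd_def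
  have hdouble : ∀ y ∈ closedBall z (d / 2), g y ≤ 4 * g z := fun y hy => by
    have hdy : d / 2 ≤ r - dist y x₀ := by
      linarith [dist_triangle y z x₀, mem_closedBall.1 hy, hd_def]
    have hy_max : (r - dist y x₀) ^ 2 * g y ≤ d ^ 2 * g z :=
      hmax (mem_closedBall.2 (by linarith))
    have hweight : (d / 2) ^ 2 * g y ≤ (r - dist y x₀) ^ 2 * g y := by gcongr; exact hg0 y
    refine le_of_mul_le_mul_left ?_ (pow_pos hd 2)
    linarith
  linarith [h hd (by linarith) hdouble]

variable {E : Type*} [NormedAddCommGroup E] [NormedSpace ℝ E]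

/-- Bounds on `s` for the coefficients of the operator `u ↦ 𝒜 · (hess u) + fderiv ℝ u · (b ·)`:
each frozen principal part `𝒜 x` satisfies the interior estimate with constant `C`, and `M` bounds
the drift `b` and the Lipschitz constants of `𝒜` and `b`. -/
structure CoefficientBoundsOn (𝒜 : E → (E →L[ℝ] E →L[ℝ] ℝ) → ℝ) (b : E → E) (s : Set E)
    (C M : ℝ) : Prop where
  hessianEstimate : ∀ x ∈ s, HessianEstimate (𝒜 x) C
  abs_sub_le : ∀ x ∈ s, ∀ y ∈ s, ∀ B, |𝒜 x B - 𝒜 y B| ≤ M * ‖x - y‖ * ‖B‖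
  norm_drift_le : ∀ x ∈ s, ‖b x‖ ≤ M
  norm_drift_sub_le : ∀ x ∈ s, ∀ y ∈ s, ‖b x - b y‖ ≤ M * ‖x - y‖

/-- On `s`, the function `u` is bounded by `S` and solves the equation with principal part `𝒜`,
drift `b` and right-hand side `f`, the latter being Lipschitz with constant `H`. -/
structure BoundedSolutionOn (𝒜 : E → (E →L[ℝ] E →L[ℝ] ℝ) → ℝ) (b : E → E) (f u : E → ℝ)
    (s : Set E) (S H : ℝ) : Prop where
  equation : ∀ y ∈ s, 𝒜 y (hess u y) + fderiv ℝ u y (b y) = f y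
  abs_le : ∀ y ∈ s, |u y| ≤ S
  abs_rhs_sub_le : ∀ y ∈ s, ∀ z ∈ s, |f y - f z| ≤ H * ‖y - z‖

variable {𝒜 : E → (E →L[ℝ] E →L[ℝ] ℝ) → ℝ} {b : E → E} {s t : Set E} {C M : ℝ} {f u : E → ℝ}
  {x : E} {ρ S H D N : ℝ}

theorem CoefficientBoundsOn.mono (h : CoefficientBoundsOn 𝒜 b s C M) (hts : t ⊆ s) :
    CoefficientBoundsOn 𝒜 b t C M where
  hessianEstimate x hx := h.hessianEstimate x (hts hx)
  abs_sub_le x hx y hy := h.abs_sub_le x (hts hx) y (hts hy)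
  norm_drift_le x hx := h.norm_drift_le x (hts hx)
  norm_drift_sub_le x hx y hy := h.norm_drift_sub_le x (hts hx) y (hts hy)

theorem BoundedSolutionOn.mono (h : BoundedSolutionOn 𝒜 b f u s S H) (hts : t ⊆ s) :
    BoundedSolutionOn 𝒜 b f u t S H where
  equation y hy := h.equation y (hts hy)
  abs_le y hy := h.abs_le y (hts hy)
  abs_rhs_sub_le y hy z hz := h.abs_rhs_sub_le y (hts hy) z (hts hz)

theorem abs_fderiv_apply_sub_le (hu : ContDiff ℝ 2 u)
    (hb : ∀ y ∈ closedBall x ρ, ‖b y‖ ≤ M)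
    (hb' : ∀ y ∈ closedBall x ρ, ‖b y - b x‖ ≤ M * ‖y - x‖)
    (hD : ∀ y ∈ closedBall x ρ, ‖fderiv ℝ u y‖ ≤ D)
    (hN : ∀ y ∈ closedBall x ρ, ‖hess u y‖ ≤ N) {y : E} (hy : y ∈ closedBall x ρ) :
    |fderiv ℝ u y (b y) - fderiv ℝ u x (b x)| ≤ M * (D + N) * ‖y - x‖ := by
  have hx : x ∈ closedBall x ρ := mem_closedBall_self (dist_nonneg.trans hy)
  have hfderiv := norm_fderiv_sub_le_of_norm_hess_le hu (convex_closedBall x ρ) hN hx hy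
  calc |fderiv ℝ u y (b y) - fderiv ℝ u x (b x)|
    _ = ‖fderiv ℝ u y (b y - b x) + (fderiv ℝ u y - fderiv ℝ u x) (b x)‖ := by
        simp
    _ ≤ D * (M * ‖y - x‖) + N * ‖y - x‖ * M :=
        norm_add_le_of_le (ContinuousLinearMap.le_of_opNorm_le_of_le _ (hD y hy) (hb' y hy))
          (ContinuousLinearMap.le_of_opNorm_le_of_le _ hfderiv (hb x hx))
    _ = M * (D + N) * ‖y - x‖ := by ring

theorem norm_hess_le_of_frozen (hcoef : CoefficientBoundsOn 𝒜 b (closedBall x ρ) C M)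
    (hsol : BoundedSolutionOn 𝒜 b f u (closedBall x ρ) S H) (hu : ContDiff ℝ 2 u)
    (hM : 0 ≤ M) (hH : 0 ≤ H) (hρ : 0 < ρ) (hD : ∀ y ∈ closedBall x ρ, ‖fderiv ℝ u y‖ ≤ D)
    (hN : ∀ y ∈ closedBall x ρ, ‖hess u y‖ ≤ N) :
    ‖hess u x‖ ≤ C * (S / ρ ^ 2 + (H + M * (D + N) + M * N) * ρ) := by
  have hx : x ∈ closedBall x ρ := mem_closedBall_self hρ.le
  have hD0 : 0 ≤ D := (norm_nonneg _).trans (hD x hx)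
  have hN0 : 0 ≤ N := (norm_nonneg (hess u x)).trans (hN x hx)
  refine hcoef.hessianEstimate x hx hu (c := f x - fderiv ℝ u x (b x)) hρ (by positivity)
    hsol.abs_le fun y hy => ?_
  have hdrift := abs_fderiv_apply_sub_le hu hcoef.norm_drift_le
    (fun y hy => hcoef.norm_drift_sub_le y hy x hx) hD hN hy
  have hfreeze : |𝒜 x (hess u y) - 𝒜 y (hess u y)| ≤ M * N * ‖y - x‖ := by
    refine (hcoef.abs_sub_le x hx y hy _).trans ?_
    rw [norm_sub_rev, mul_right_comm]
    gcongr
    exact hN y hy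
  have hsplit : 𝒜 x (hess u y) - (f x - fderiv ℝ u x (b x)) =
      (𝒜 x (hess u y) - 𝒜 y (hess u y)) + (f y - f x) -
        (fderiv ℝ u y (b y) - fderiv ℝ u x (b x)) := by rw [← hsol.equation y hy]; ring
  rw [hsplit]
  refine (abs_sub _ _).trans ((add_le_add_left (abs_add_le _ _) _).trans ?_)
  linarith [hsol.abs_rhs_sub_le y hy x hx]

theorem norm_hess_le_of_norm_hess_le (hcoef : CoefficientBoundsOn 𝒜 b (closedBall x (2 * ρ)) C M)
    (hsol : BoundedSolutionOn 𝒜 b f u (closedBall x (2 * ρ)) S H) (hu : ContDiff ℝ 2 u)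
    (hC : 0 ≤ C) (hM : 0 ≤ M) (hH : 0 ≤ H) (hρ : 0 < ρ) (hρ1 : ρ ≤ 1)
    (hN : ∀ y ∈ closedBall x (2 * ρ), ‖hess u y‖ ≤ N) :
    ‖hess u x‖ ≤ C * (S / ρ ^ 2 + H * ρ + 2 * M * S + 3 * M * N * ρ) := by
  have hsub : closedBall x ρ ⊆ closedBall x (2 * ρ) := closedBall_subset_closedBall (by linarith)
  have hsub' : ∀ y ∈ closedBall x ρ, closedBall y ρ ⊆ closedBall x (2 * ρ) := fun y hy =>
    closedBall_subset_closedBall' (by linarith [mem_closedBall.1 hy])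
  have hN0 : 0 ≤ N := (norm_nonneg (hess u x)).trans (hN x (mem_closedBall_self (by positivity)))
  have hD : ∀ y ∈ closedBall x ρ, ‖fderiv ℝ u y‖ ≤ 2 * S / ρ + N * ρ := fun y hy =>
    norm_fderiv_le_of_abs_le_of_norm_hess_le hu hρ (fun z hz => hsol.abs_le z (hsub' y hy hz))
      fun z hz => hN z (hsub' y hy hz)
  calc ‖hess u x‖
    _ ≤ C * (S / ρ ^ 2 + (H + M * (2 * S / ρ + N * ρ + N) + M * N) * ρ) :=
        norm_hess_le_of_frozen (hcoef.mono hsub) (hsol.mono hsub) hu hM hH hρ hD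
          fun y hy => hN y (hsub hy)
    _ = C * (S / ρ ^ 2 + H * ρ + 2 * M * S + 2 * M * N * ρ + M * N * ρ * ρ) := by
        field_simp
        ring
    _ ≤ C * (S / ρ ^ 2 + H * ρ + 2 * M * S + 2 * M * N * ρ + M * N * ρ * 1) := by gcongr
    _ = C * (S / ρ ^ 2 + H * ρ + 2 * M * S + 3 * M * N * ρ) := by ring

theorem sq_mul_norm_hess_le [ProperSpace E] {r : ℝ}
    (hcoef : CoefficientBoundsOn 𝒜 b (closedBall x r) C M)
    (hsol : BoundedSolutionOn 𝒜 b f u (closedBall x r) S H) (hu : ContDiff ℝ 2 u)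
    (hC : 0 ≤ C) (hM : 0 ≤ M) (hH : 0 ≤ H) (hr : 0 < r) (hr1 : r ≤ 1) {y : E}
    (hy : y ∈ closedBall x r) :
    (r - dist y x) ^ 2 * ‖hess u y‖ ≤
      2 * (C * ((4 + 24 * C * M) ^ 2 + 1 + 2 * M) * (S + H * r ^ 3)) := by
  have hS : 0 ≤ S := (abs_nonneg _).trans (hsol.abs_le x (mem_closedBall_self hr.le))
  set κ : ℝ := 4 + 24 * C * M with hκ_def
  have hκ : 4 ≤ κ := by simp only [hκ_def, le_add_iff_nonneg_right]; positivity
  refine sq_mul_le_of_forall_ball (g := fun y => ‖hess u y‖) (continuous_norm_hess hu)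
    (fun y => norm_nonneg (hess u y)) hr.le (by positivity) (fun z d N hd hzd hN => ?_) hy
  have hN0 : 0 ≤ N := (norm_nonneg (hess u z)).trans (hN z (mem_closedBall_self (by positivity)))
  have hdr : d ≤ r := by linarith [dist_nonneg (x := z) (y := x)]
  have hρd : 2 * (d / κ) ≤ d / 2 := by
    rw [mul_div_assoc', div_le_div_iff₀ (by linarith) two_pos]
    nlinarith
  have hsub : closedBall z (2 * (d / κ)) ⊆ closedBall x r :=
    closedBall_subset_closedBall' (by linarith)
  have hhess := norm_hess_le_of_norm_hess_le (hcoef.mono hsub) (hsol.mono hsub) hu hC hM hH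
    (by positivity) (by linarith) fun w hw => hN w (closedBall_subset_closedBall hρd hw)
  have habsorb : 3 * C * M * (d / κ) ≤ 1 / 8 := by
    rw [mul_div_assoc', div_le_iff₀ (by linarith)]
    have : C * M * d ≤ C * M * 1 := by gcongr; linarith
    linarith
  have hd1 : d ^ 2 ≤ 1 := pow_le_one₀ hd.le (hdr.trans hr1)
  have hρ1 : d / κ ≤ d := by linarith
  calc d ^ 2 * ‖hess u z‖
    _ ≤ d ^ 2 * (C * (S / (d / κ) ^ 2 + H * (d / κ) + 2 * M * S + 3 * M * N * (d / κ))) := by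
        gcongr
    _ = C * (κ ^ 2 * S + H * (d ^ 2 * (d / κ)) + 2 * M * (d ^ 2 * S)) +
          d ^ 2 * N * (3 * C * M * (d / κ)) := by
        have : κ ≠ 0 := by linarith
        field_simp
    _ ≤ C * (κ ^ 2 * S + H * (r ^ 2 * r) + 2 * M * (1 * S)) + d ^ 2 * N * (1 / 8) := by
        gcongr
        exact hρ1.trans hdr
    _ ≤ C * (κ ^ 2 + 1 + 2 * M) * (S + H * r ^ 3) + d ^ 2 * N / 8 := by
        have : 0 ≤ C * (S + (κ ^ 2 + 2 * M) * (H * r ^ 3)) := by positivity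
        linarith

theorem exists_interior_estimate [ProperSpace E] (hC : 0 ≤ C) (hM : 0 ≤ M) :
    ∃ C' : ℝ, 0 < C' ∧ ∀ (𝒜 : E → (E →L[ℝ] E →L[ℝ] ℝ) → ℝ) (b : E → E) (f u : E → ℝ) (x : E)
      (r S H : ℝ), CoefficientBoundsOn 𝒜 b (closedBall x r) C M →
      BoundedSolutionOn 𝒜 b f u (closedBall x r) S H → ContDiff ℝ 2 u → 0 ≤ H → 0 < r → r ≤ 1 →
      r * ‖fderiv ℝ u x‖ ≤ C' * (S + H * r ^ 3) ∧ r ^ 2 * ‖hess u x‖ ≤ C' * (S + H * r ^ 3) := by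
  set Q : ℝ := C * ((4 + 24 * C * M) ^ 2 + 1 + 2 * M)
  have hQ : 0 ≤ Q := by positivity
  refine ⟨4 + 4 * Q, by linarith [hQ], fun 𝒜 b f u x r S H hcoef hsol hu hH hr hr1 => ?_⟩
  have hx : x ∈ closedBall x r := mem_closedBall_self hr.le
  have hS : 0 ≤ S := (abs_nonneg _).trans (hsol.abs_le x hx)
  have hT : 0 ≤ H * r ^ 3 := by positivity
  have hhess : ∀ y ∈ closedBall x r,
      (r - dist y x) ^ 2 * ‖hess u y‖ ≤ 2 * (Q * (S + H * r ^ 3)) := fun y hy =>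
    sq_mul_norm_hess_le hcoef hsol hu hC hM hH hr hr1 hy
  have hsub : closedBall x (r / 2) ⊆ closedBall x r := closedBall_subset_closedBall (by linarith)
  have hhalf : ∀ y ∈ closedBall x (r / 2), ‖hess u y‖ ≤ 8 * (Q * (S + H * r ^ 3)) / r ^ 2 := by
    intro y hy
    rw [le_div_iff₀' (by positivity)]
    have : (r / 2) ^ 2 * ‖hess u y‖ ≤ (r - dist y x) ^ 2 * ‖hess u y‖ := by
      gcongr
      linarith [mem_closedBall.1 hy]
    linarith [hhess y (hsub hy)]
  have hfderiv := norm_fderiv_le_of_abs_le_of_norm_hess_le hu (half_pos hr)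
    (fun y hy => hsol.abs_le y (hsub hy)) hhalf
  constructor
  · calc r * ‖fderiv ℝ u x‖
      _ ≤ r * (2 * S / (r / 2) + 8 * (Q * (S + H * r ^ 3)) / r ^ 2 * (r / 2)) := by gcongr
      _ = 4 * S + 4 * (Q * (S + H * r ^ 3)) := by
          field_simp
          ring
      _ ≤ (4 + 4 * Q) * (S + H * r ^ 3) := by linarith
  · have hcentre := hhess x hx
    rw [dist_self, sub_zero] at hcentre
    have : 0 ≤ Q * (S + H * r ^ 3) := by positivity
    linarith

end Absorption

section DivergenceForm

variable {ι : Type*} [Fintype ι]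

theorem sum_sum_le_card_sq_mul {g : ι → ι → ℝ} {L : ℝ} (hg : ∀ i j, g i j ≤ L) :
    ∑ i, ∑ j, g i j ≤ Fintype.card ι ^ 2 * L :=
  calc ∑ i, ∑ j, g i j
    _ ≤ ∑ _i : ι, ∑ _j : ι, L := Finset.sum_le_sum fun i _ => Finset.sum_le_sum fun j _ => hg i j
    _ = Fintype.card ι ^ 2 * L := by simp [sq, mul_assoc]

variable [DecidableEq ι]

/-- The vector with components `∑ i, ∂ᵢ Tᵢⱼ`, where `T i j` is the differential of the `(i, j)`
entry of a matrix field: the drift obtained by expanding an operator in divergence form. -/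
def divergence (T : ι → ι → EuclideanSpace ℝ ι →L[ℝ] ℝ) : EuclideanSpace ℝ ι :=
  ∑ i, ∑ j, T i j (EuclideanSpace.single i 1) • EuclideanSpace.single j 1

theorem divergence_sub (T T' : ι → ι → EuclideanSpace ℝ ι →L[ℝ] ℝ) :
    divergence (T - T') = divergence T - divergence T' := by
  simp [divergence, sub_smul, Finset.sum_sub_distrib]

theorem norm_divergence_le {T : ι → ι → EuclideanSpace ℝ ι →L[ℝ] ℝ} {L : ℝ}
    (hT : ∀ i j, ‖T i j‖ ≤ L) : ‖divergence T‖ ≤ Fintype.card ι ^ 2 * L := by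
  refine (norm_sum_le_of_le _ fun i _ => norm_sum_le _ _).trans
    (sum_sum_le_card_sq_mul fun i j => ?_)
  simpa [norm_smul] using (T i j).le_of_opNorm_le (hT i j) (EuclideanSpace.single i 1)

theorem sum_fderiv_mul_fderiv_eq {a : EuclideanSpace ℝ ι → Matrix ι ι ℝ}
    {e : EuclideanSpace ℝ ι → ℝ} {x : EuclideanSpace ℝ ι}
    (ha : ∀ i j, DifferentiableAt ℝ (fun y => a y i j) x) (he : ContDiffAt ℝ 2 e x) :
    ∑ i, ∑ j, fderiv ℝ (fun y => a y i j * fderiv ℝ e y (EuclideanSpace.single j 1)) x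
        (EuclideanSpace.single i 1) =
      hessPairing (a x) (hess e x) +
        fderiv ℝ e x (divergence fun i j => fderiv ℝ (fun y => a y i j) x) := by
  have hfderiv := differentiableAt_fderiv_of_contDiffAt_two he
  simp only [hessPairing, divergence, map_sum, map_smul, ← Finset.sum_add_distrib]
  refine Finset.sum_congr rfl fun i _ => Finset.sum_congr rfl fun j _ => ?_
  rw [fderiv_fun_mul (ha i j) (hfderiv.clm_apply (differentiableAt_const _))]
  simp [fderiv_fderiv_apply hfderiv, mul_comm]

theorem abs_le_and_norm_fderiv_le_and_norm_hess_le {E : Type*} [NormedAddCommGroup E]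
    [NormedSpace ℝ E] {g : E → ℝ} {s : Set E} {x : E} {M : ℝ} (hs : IsOpen s) (hx : x ∈ s)
    (h : ∀ n ≤ 2, ‖iteratedFDerivWithin ℝ n g s x‖ ≤ M) :
    |g x| ≤ M ∧ ‖fderiv ℝ g x‖ ≤ M ∧ ‖hess g x‖ ≤ M := by
  simp only [iteratedFDerivWithin_of_isOpen _ hs hx] at h
  refine ⟨?_, ?_, ?_⟩
  · simpa using h 0 zero_le_two
  · simpa [norm_iteratedFDeriv_one] using h 1 one_le_two
  · simpa [norm_iteratedFDeriv_two_eq_norm_hess] using h 2 le_rfl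

theorem exists_coefficientBoundsOn (ι : Type*) [Fintype ι] [DecidableEq ι] {lam : ℝ}
    (hlam : 0 < lam) (M : ℝ) :
    ∃ C : ℝ, 0 ≤ C ∧ ∀ (a : EuclideanSpace ℝ ι → Matrix ι ι ℝ) (s : Set (EuclideanSpace ℝ ι)),
      IsOpen s → Convex ℝ s → (∀ i j, ContDiffOn ℝ 2 (fun y => a y i j) s) →
      (∀ i j, ∀ n ≤ 2, ∀ x ∈ s, ‖iteratedFDerivWithin ℝ n (fun y => a y i j) s x‖ ≤ M) →
      (∀ x ∈ s, ∀ ξ : ι → ℝ, lam * (∑ i, ξ i ^ 2) ≤ ∑ i, ∑ j, a x i j * ξ i * ξ j) →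
      CoefficientBoundsOn (fun y => hessPairing (a y))
        (fun y => divergence fun i j => fderiv ℝ (fun z => a z i j) y) s C
        (Fintype.card ι ^ 2 * M) := by
  obtain ⟨C, hC, hest⟩ := exists_hessianEstimate_hessPairing ι hlam (Fintype.card ι ^ 2 * M)
  refine ⟨C, hC, fun a s hs hconv ha haM hell => ?_⟩
  have hbound (i j : ι) (x) (hx : x ∈ s) := abs_le_and_norm_fderiv_le_and_norm_hess_le hs hx
    fun n hn => haM i j n hn x hx
  have hC2 (i j : ι) (x) (hx : x ∈ s) : ContDiffAt ℝ 2 (fun y => a y i j) x :=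
    (ha i j).contDiffAt (hs.mem_nhds hx)
  refine ⟨fun x hx => hest (a x) (fun ξ => ?_)
      (sum_sum_le_card_sq_mul fun i j => (hbound i j x hx).1),
    fun x hx y hy B => ?_, fun x hx => norm_divergence_le fun i j => (hbound i j x hx).2.1,
    fun x hx y hy => ?_⟩
  · rw [EuclideanSpace.real_norm_sq_eq]
    refine (hell x hx ξ).trans_eq ?_
    simp only [dotProduct, Matrix.mulVec, Finset.mul_sum]
    exact Finset.sum_congr rfl fun i _ => Finset.sum_congr rfl fun j _ => by ring
  · rw [← hessPairing_sub, mul_assoc _ M]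
    refine abs_hessPairing_le (sum_sum_le_card_sq_mul fun i j => ?_)
    exact hconv.norm_image_sub_le_of_norm_fderiv_le
      (fun z hz => (hC2 i j z hz).differentiableAt two_ne_zero)
      (fun z hz => (hbound i j z hz).2.1) hy hx
  · rw [← divergence_sub, mul_assoc]
    refine norm_divergence_le fun i j => ?_
    exact hconv.norm_image_sub_le_of_norm_fderiv_le
      (fun z hz => differentiableAt_fderiv_of_contDiffAt_two (hC2 i j z hz))
      (fun z hz => (hbound i j z hz).2.2) hy hx

end DivergenceForm

section Rescaling

theorem exists_contDiff_eventuallyEq {E : Type*} [NormedAddCommGroup E] [NormedSpace ℝ E]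
    [HasContDiffBump E] {n : ℕ∞} {e : E → ℝ} {x : E} {r R : ℝ} (hr : 0 < r) (hrR : r < R)
    (he : ContDiffOn ℝ n e (ball x R)) :
    ∃ u : E → ℝ, ContDiff ℝ n u ∧ ∀ y ∈ closedBall x r, u =ᶠ[𝓝 y] e := by
  obtain ⟨r', hrr', hr'R⟩ := exists_between hrR
  obtain ⟨R', hr'R', hR'R⟩ := exists_between hr'R
  let χ : ContDiffBump x := ⟨r', R', hr.trans hrr', hr'R'⟩
  refine ⟨fun y => χ y * e y, contDiff_iff_contDiffAt.2 fun y => ?_, fun y hy => ?_⟩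
  · by_cases hy : y ∈ ball x R
    · exact χ.contDiff.contDiffAt.mul (he.contDiffAt (isOpen_ball.mem_nhds hy))
    · have hyR' : y ∈ (closedBall x R')ᶜ := fun h => hy (closedBall_subset_ball hR'R h)
      refine (contDiffAt_const (c := 0)).congr_of_eventuallyEq ?_
      filter_upwards [isClosed_closedBall.isOpen_compl.mem_nhds hyR'] with z hz
      rw [χ.zero_of_le_dist (le_of_not_ge hz), zero_mul]
  · filter_upwards [isOpen_ball.mem_nhds (closedBall_subset_ball hrr' hy)] with z hz
    rw [χ.one_of_mem_closedBall (ball_subset_closedBall hz), one_mul]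

theorem fderiv_sub_const_eventuallyEq {E : Type*} [NormedAddCommGroup E] [NormedSpace ℝ E]
    {e u : E → ℝ} {y : E} (hue : u =ᶠ[𝓝 y] e) (c : ℝ) :
    fderiv ℝ (fun z => u z - c) =ᶠ[𝓝 y] fderiv ℝ e :=
  (hue.fderiv (𝕜 := ℝ)).mono fun _ hz => (fderiv_sub_const c).trans hz

theorem rpow_le_two_rpow_abs_mul_rpow {s t : ℝ} (β : ℝ) (ht : 0 < t) (hts : t / 2 ≤ s)
    (hst : s ≤ 2 * t) : s ^ β ≤ 2 ^ |β| * t ^ β := by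
  obtain hβ | hβ := le_total 0 β
  · rw [abs_of_nonneg hβ, ← Real.mul_rpow zero_le_two ht.le]
    exact Real.rpow_le_rpow (by linarith) hst hβ
  · rw [abs_of_nonpos hβ, Real.rpow_neg zero_le_two, ← Real.inv_rpow zero_le_two,
      ← Real.mul_rpow (by positivity) ht.le, ← div_eq_inv_mul]
    exact Real.rpow_le_rpow_of_nonpos (by positivity) hts hβ

theorem add_mul_cube_le_mul_rpow {s τ A K : ℝ} (hs : 0 < s) (hs1 : s ≤ 1) (hτ : 0 ≤ τ)
    (hK : 0 ≤ K) :
    A * K * s ^ (1 - τ) + 4 * K / s ^ 2 * (s / 2) ^ 3 ≤ (A + 1) * K * s ^ (1 - τ) := by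
  have hle : s ≤ s ^ (1 - τ) := by
    simpa using Real.rpow_le_rpow_of_exponent_ge hs hs1 (by linarith : 1 - τ ≤ 1)
  calc A * K * s ^ (1 - τ) + 4 * K / s ^ 2 * (s / 2) ^ 3
    _ = A * K * s ^ (1 - τ) + K * s / 2 := by
        field_simp
        ring
    _ ≤ A * K * s ^ (1 - τ) + K * s ^ (1 - τ) := by
        have : K * s ≤ K * s ^ (1 - τ) := by gcongr
        have : 0 ≤ K * s := by positivity
        linarith
    _ = (A + 1) * K * s ^ (1 - τ) := by ring

theorem le_mul_rpow_of_half_pow_mul_le {s g Q β γ : ℝ} {n : ℕ} (hs : 0 < s) (hγ : γ = β - n)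
    (h : (s / 2) ^ n * g ≤ Q * s ^ β) : g ≤ 2 ^ n * Q * s ^ γ := by
  rw [div_pow, div_mul_eq_mul_div, div_le_iff₀' (by positivity)] at h
  rw [hγ, Real.rpow_sub_natCast hs.ne', mul_div_assoc', le_div_iff₀' (by positivity)]
  linarith

theorem le_mul_rpow_neg_of_scaled_le {s τ A K C g h : ℝ} (hs : 0 < s) (hs1 : s ≤ 1) (hτ : 0 ≤ τ)
    (hA : 0 ≤ A) (hK : 0 ≤ K) (hC : 0 ≤ C)
    (hg : s / 2 * g ≤ C * (A * K * s ^ (1 - τ) + 4 * K / s ^ 2 * (s / 2) ^ 3))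
    (hh : (s / 2) ^ 2 * h ≤ C * (A * K * s ^ (1 - τ) + 4 * K / s ^ 2 * (s / 2) ^ 3)) :
    g ≤ 4 * (C * ((A + 1) * K)) * s ^ (-τ) ∧ h ≤ 4 * (C * ((A + 1) * K)) * s ^ (-(1 + τ)) := by
  set Q := C * ((A + 1) * K)
  have hdata : C * (A * K * s ^ (1 - τ) + 4 * K / s ^ 2 * (s / 2) ^ 3) ≤ Q * s ^ (1 - τ) := by
    rw [mul_assoc C]
    gcongr
    exact add_mul_cube_le_mul_rpow hs hs1 hτ hK
  constructor
  · calc g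
      _ ≤ 2 ^ 1 * Q * s ^ (-τ) :=
          le_mul_rpow_of_half_pow_mul_le (β := 1 - τ) hs (by push_cast; ring)
            (by simpa only [pow_one] using hg.trans hdata)
      _ ≤ 4 * Q * s ^ (-τ) := by gcongr; norm_num
  · calc h
      _ ≤ 2 ^ 2 * Q * s ^ (-(1 + τ)) :=
          le_mul_rpow_of_half_pow_mul_le (β := 1 - τ) hs (by push_cast; ring) (hh.trans hdata)
      _ = 4 * Q * s ^ (-(1 + τ)) := by norm_num

theorem norm_mem_Icc_of_mem_closedBall_half_norm {E : Type*} [SeminormedAddCommGroup E] {x y : E}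
    (hy : y ∈ closedBall x (‖x‖ / 2)) : ‖y‖ ∈ Icc (‖x‖ / 2) (2 * ‖x‖) := by
  rw [mem_closedBall, dist_eq_norm] at hy
  constructor
  · linarith [norm_sub_norm_le x y, norm_sub_rev x y]
  · linarith [norm_sub_norm_le y x, norm_nonneg x]

theorem ball_norm_subset_ball_diff_singleton {E : Type*} [NormedAddCommGroup E] {x : E}
    (hx : ‖x‖ ≤ 1 / 2) : ball x ‖x‖ ⊆ ball (0 : E) 1 \ {0} := by
  refine subset_sdiff_singleton (ball_subset_ball' ?_) (by simp)
  rw [dist_zero_right]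
  linarith

variable {ι : Type*} [Fintype ι] [DecidableEq ι]

theorem boundedSolutionOn_closedBall_half_norm {a : EuclideanSpace ℝ ι → Matrix ι ι ℝ}
    {e f u : EuclideanSpace ℝ ι → ℝ} {x : EuclideanSpace ℝ ι} {c β K : ℝ} (hK : 0 ≤ K)
    (hx : 0 < ‖x‖) (hx2 : ‖x‖ ≤ 1 / 2)
    (ha : ∀ i j, ContDiffOn ℝ 2 (fun y => a y i j) (ball 0 1))
    (he : ContDiffOn ℝ 2 e (ball 0 1 \ {0})) (hf : DifferentiableOn ℝ f (ball 0 1 \ {0}))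
    (hfK : ∀ y ∈ ball 0 1 \ {0}, ‖fderiv ℝ f y‖ ≤ K * ‖y‖⁻¹ ^ 2)
    (heq : ∀ y ∈ ball (0 : EuclideanSpace ℝ ι) 1 \ {0}, ∑ i, ∑ j, fderiv ℝ
      (fun z => a z i j * fderiv ℝ e z (EuclideanSpace.single j 1)) y
      (EuclideanSpace.single i 1) = f y)
    (hgrowth : ∀ y ∈ ball 0 1 \ {0}, |e y - c| ≤ K * ‖y‖ ^ β)
    (hue : ∀ y ∈ closedBall x (‖x‖ / 2), u =ᶠ[𝓝 y] e) :
    BoundedSolutionOn (fun y => hessPairing (a y))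
      (fun y => divergence fun i j => fderiv ℝ (fun z => a z i j) y) f (fun y => u y - c)
      (closedBall x (‖x‖ / 2)) (2 ^ |β| * K * ‖x‖ ^ β) (4 * K / ‖x‖ ^ 2) := by
  have hopen : IsOpen (ball (0 : EuclideanSpace ℝ ι) 1 \ {0}) :=
    isOpen_ball.sdiff isClosed_singleton
  have hsub : closedBall x (‖x‖ / 2) ⊆ ball 0 1 \ {0} :=
    (closedBall_subset_ball (half_lt_self hx)).trans (ball_norm_subset_ball_diff_singleton hx2)
  refine ⟨fun y hy => ?_, fun y hy => ?_, fun y hy z hz => ?_⟩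
  · have hay (i j : ι) : DifferentiableAt ℝ (fun z => a z i j) y :=
      ((ha i j).contDiffAt (isOpen_ball.mem_nhds (hsub hy).1)).differentiableAt two_ne_zero
    have hfderiv := fderiv_sub_const_eventuallyEq (hue y hy) c
    rw [hess, hfderiv.fderiv_eq, hfderiv.eq_of_nhds, ← heq y (hsub hy),
      sum_fderiv_mul_fderiv_eq hay (he.contDiffAt (hopen.mem_nhds (hsub hy)))]
  · have hnorm := norm_mem_Icc_of_mem_closedBall_half_norm hy
    calc |u y - c|
      _ ≤ K * ‖y‖ ^ β := by simpa [(hue y hy).eq_of_nhds] using hgrowth y (hsub hy)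
      _ ≤ K * (2 ^ |β| * ‖x‖ ^ β) := by
          gcongr
          exact rpow_le_two_rpow_abs_mul_rpow β hx hnorm.1 hnorm.2
      _ = 2 ^ |β| * K * ‖x‖ ^ β := by ring
  · refine (convex_closedBall x (‖x‖ / 2)).norm_image_sub_le_of_norm_fderiv_le (𝕜 := ℝ)
      (fun w hw => hf.differentiableAt (hopen.mem_nhds (hsub hw)))
      (fun w hw => (hfK w (hsub hw)).trans ?_) hz hy
    calc K * ‖w‖⁻¹ ^ 2
      _ ≤ K * (‖x‖ / 2)⁻¹ ^ 2 := by
          gcongr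
          exact (norm_mem_Icc_of_mem_closedBall_half_norm hw).1
      _ = 4 * K / ‖x‖ ^ 2 := by
          field_simp
          norm_num

end Rescaling

theorem norm_gradient {E : Type*} [NormedAddCommGroup E] [InnerProductSpace ℝ E] [CompleteSpace E]
    (e : E → ℝ) (x : E) : ‖gradient e x‖ = ‖fderiv ℝ e x‖ :=
  LinearIsometryEquiv.norm_map _ _

theorem stmt_11_general (ι : Type*) [Fintype ι] [DecidableEq ι] {τ lam K M : ℝ} (hτ : 0 ≤ τ)
    (hlam : 0 < lam) (hK : 0 < K) (hM : 0 ≤ M) :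
    ∃ C : ℝ, 0 < C ∧ ∀ (a : EuclideanSpace ℝ ι → Matrix ι ι ℝ) (e f : EuclideanSpace ℝ ι → ℝ)
      (c : ℝ), (∀ i j, ContDiffOn ℝ 2 (fun y => a y i j) (ball 0 1)) →
      (∀ i j, ∀ n ≤ 2, ∀ x ∈ ball 0 1,
        ‖iteratedFDerivWithin ℝ n (fun y => a y i j) (ball 0 1) x‖ ≤ M) →
      (∀ x ∈ ball 0 1, ∀ ξ : ι → ℝ, lam * (∑ i, ξ i ^ 2) ≤ ∑ i, ∑ j, a x i j * ξ i * ξ j) →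
      ContDiffOn ℝ 2 e (ball 0 1 \ {0}) →
      DifferentiableOn ℝ f (ball 0 1 \ {0}) →
      (∀ x ∈ ball 0 1 \ {0}, ‖fderiv ℝ f x‖ ≤ K * ‖x‖⁻¹ ^ 2) →
      (∀ x ∈ ball (0 : EuclideanSpace ℝ ι) 1 \ {0}, ∑ i, ∑ j, fderiv ℝ
        (fun y => a y i j * fderiv ℝ e y (EuclideanSpace.single j 1)) x
        (EuclideanSpace.single i 1) = f x) →
      (∀ x ∈ ball 0 1 \ {0}, |e x - c| ≤ K * ‖x‖ ^ (1 - τ)) →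
      ∀ x, 0 < ‖x‖ → ‖x‖ ≤ 1 / 2 →
        ‖gradient e x‖ ≤ C * ‖x‖ ^ (-τ) ∧ ‖iteratedFDeriv ℝ 2 e x‖ ≤ C * ‖x‖ ^ (-(1 + τ)) := by
  obtain ⟨C₀, hC₀, hcoef⟩ := exists_coefficientBoundsOn ι hlam M
  obtain ⟨C, hC, hest⟩ := exists_interior_estimate (E := EuclideanSpace ℝ ι) hC₀
    (M := Fintype.card ι ^ 2 * M) (by positivity)
  refine ⟨4 * (C * ((2 ^ |1 - τ| + 1) * K)), by positivity,
    fun a e f c ha haM hell he hf hfK heq hgrowth x hx hx2 => ?_⟩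
  have hsub := ball_norm_subset_ball_diff_singleton hx2
  have hsub' := (closedBall_subset_ball (half_lt_self hx)).trans hsub
  obtain ⟨u, hu, hue⟩ := exists_contDiff_eventuallyEq (half_pos hx) (half_lt_self hx) (he.mono hsub)
  obtain ⟨hgrad, hhess⟩ := hest _ _ f (fun y => u y - c) x _ _ _
    ((hcoef a _ isOpen_ball (convex_ball 0 1) ha haM hell).mono (hsub'.trans sdiff_subset))
    (boundedSolutionOn_closedBall_half_norm hK.le hx hx2 ha he hf hfK heq hgrowth hue)
    (hu.sub contDiff_const) (by positivity) (half_pos hx) (by linarith)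
  have hfderiv := fderiv_sub_const_eventuallyEq (hue x (mem_closedBall_self (half_pos hx).le)) c
  rw [hfderiv.eq_of_nhds] at hgrad
  rw [hess, hfderiv.fderiv_eq] at hhess
  rw [norm_gradient, norm_iteratedFDeriv_two_eq_norm_hess]
  exact le_mul_rpow_neg_of_scaled_le hx (by linarith) hτ (by positivity) hK.le hC.le hgrad hhess

/-- derivative estimates for the Green's function remainder. Fix
`τ ∈ (0,1)`, ellipticity constants `0 < λ ≤ Λ`, and `K, M > 0`. There are `C > 0` and
`r₁ ∈ (0,1)`, depending only on these constants, such that: if `a` is a `C²` symmetric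
uniformly elliptic matrix field on the unit ball `B` with `C²`-norm at most `M`, `e` is
continuous on `B` and `C²` on `B ∖ {0}` with `Σ_{i,j} ∂_i(a^{ij}∂_j e) = f` on `B ∖ {0}`
where `|f| ≤ K|x|⁻¹`, `|∇f| ≤ K|x|⁻²`, and `|e(x) − e(0)| ≤ K|x|^{1−τ}`, then
`|∇e(x)| ≤ C|x|^{−τ}` and `|∇²e(x)| ≤ C|x|^{−1−τ}` for `0 < |x| ≤ r₁`. -/
theorem stmt_11 (τ lam Lam K M : ℝ) (hτ0 : 0 < τ) (hτ1 : τ < 1)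
    (hlam : 0 < lam) (hlamLam : lam ≤ Lam) (hK : 0 < K) (hM : 0 < M) :
    ∃ C r₁ : ℝ, 0 < C ∧ 0 < r₁ ∧ r₁ < 1 ∧
    ∀ (a : E3 → Fin 3 → Fin 3 → ℝ) (e f : E3 → ℝ),
      (∀ i j, ContDiffOn ℝ 2 (fun y => a y i j) (ball (0 : E3) 1)) →
      (∀ i j, ∀ n ≤ 2, ∀ x ∈ ball (0 : E3) 1,
        ‖iteratedFDerivWithin ℝ n (fun y => a y i j) (ball (0 : E3) 1) x‖ ≤ M) →
      (∀ x ∈ ball (0 : E3) 1, ∀ i j, a x i j = a x j i) →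
      (∀ x ∈ ball (0 : E3) 1, ∀ ξ : Fin 3 → ℝ,
        lam * (∑ i, ξ i ^ 2) ≤ ∑ i, ∑ j, a x i j * ξ i * ξ j ∧
        (∑ i, ∑ j, a x i j * ξ i * ξ j) ≤ Lam * (∑ i, ξ i ^ 2)) →
      ContinuousOn e (ball (0 : E3) 1) →
      ContDiffOn ℝ 2 e (ball (0 : E3) 1 \ {0}) →
      ContDiffOn ℝ 1 f (ball (0 : E3) 1 \ {0}) →
      (∀ x ∈ ball (0 : E3) 1 \ {0},
        |f x| ≤ K * ‖x‖⁻¹ ∧ ‖fderiv ℝ f x‖ ≤ K * ‖x‖⁻¹ ^ 2) →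
      (∀ x ∈ ball (0 : E3) 1 \ ({0} : Set E3),
        (∑ i, ∑ j, fderiv ℝ
            (fun y => a y i j * fderiv ℝ e y (EuclideanSpace.single j 1))
            x (EuclideanSpace.single i 1)) = f x) →
      (∀ x ∈ ball (0 : E3) 1, |e x - e 0| ≤ K * ‖x‖ ^ (1 - τ)) →
      ∀ x : E3, 0 < ‖x‖ → ‖x‖ ≤ r₁ →
        ‖gradient e x‖ ≤ C * ‖x‖ ^ (-τ) ∧
        ‖iteratedFDeriv ℝ 2 e x‖ ≤ C * ‖x‖ ^ (-(1 + τ)) := by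
  obtain ⟨C, hC, hest⟩ := stmt_11_general (Fin 3) hτ0.le hlam hK hM.le
  exact ⟨C, 1 / 2, hC, by norm_num, by norm_num, fun a e f ha haM _ hell _ he hf hfK heq hgrowth =>
    hest a e f (e 0) ha haM (fun x hx ξ => (hell x hx ξ).1) he (hf.differentiableOn one_ne_zero)
      (fun x hx => (hfK x hx).2) heq fun x hx => hgrowth x hx.1⟩
end
end

section
/- Let n ≥ 3 and let B be the open unit ball in ℝⁿ. Define φ₀ : B → ℝ by φ₀(x) = 1 − |x|⁴ / (4(n+2)), so that Δφ₀(x) = −|x|² (Δ the Euclidean Laplacian). Then there exist constants C ≥ 1, c > 0 and ε₀ ∈ (0, 1], depending only on n, such that for every ε ∈ (0, ε₀] there is a smooth function φ : B → ℝ with sup_{x ∈ B} |φ(x) − φ₀(x)| ≤ C ε and Δφ(x) ≤ −c ε^{1/2} for every x ∈ B. -/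
open Metric Set
open scoped BigOperators

noncomputable section

/-!
Instead of a cut-off torsion function, add to `φ₀` the rational bump `d³ / (d + |x|²)` with
`d = √ε`. Its height is `d² = ε`, and its Laplacian is of order `-d` near the origin, exactly where
`Δφ₀ = -|x|²` degenerates. That Laplacian can be positive only where `|x|²` exceeds a fixed multiple
of `d`, and there `-|x|²` outweighs it.
-/

open Filter Laplacian InnerProductSpace Module
open scoped ContDiff Topology

section RadialFunctions

variable {E F : Type*} [NormedAddCommGroup E] [InnerProductSpace ℝ E]
  [NormedAddCommGroup F] [NormedSpace ℝ F]

lemma hasFDerivAt_comp_norm_sq {f : ℝ → F} {f' : F} {x : E} (hf : HasDerivAt f f' (‖x‖ ^ 2)) :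
    HasFDerivAt (fun y : E ↦ f (‖y‖ ^ 2)) (((2 : ℝ) • innerSL ℝ x).smulRight f') x := by
  refine (hf.hasFDerivAt.comp x (hasStrictFDerivAt_norm_sq x).hasFDerivAt).congr_fderiv ?_
  ext v
  simp [two_smul, add_smul]

lemma iteratedFDeriv_two_comp_norm_sq {f f' : ℝ → F} {f'' : F} {x : E}
    (hf : ∀ᶠ s in 𝓝 (‖x‖ ^ 2), HasDerivAt f (f' s) s) (hf' : HasDerivAt f' f'' (‖x‖ ^ 2))
    (v w : E) :
    iteratedFDeriv ℝ 2 (fun y : E ↦ f (‖y‖ ^ 2)) x ![v, w] =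
      (4 * ⟪x, v⟫_ℝ * ⟪x, w⟫_ℝ) • f'' + (2 * ⟪v, w⟫_ℝ) • f' (‖x‖ ^ 2) := by
  have fderiv_eventuallyEq : fderiv ℝ (fun y : E ↦ f (‖y‖ ^ 2)) =ᶠ[𝓝 x]
      fun y ↦ ((2 : ℝ) • innerSL ℝ y).smulRight (f' (‖y‖ ^ 2)) := by
    have norm_sq_tendsto : Tendsto (fun y : E ↦ ‖y‖ ^ 2) (𝓝 x) (𝓝 (‖x‖ ^ 2)) :=
      (continuous_norm.pow 2).tendsto x
    filter_upwards [norm_sq_tendsto.eventually hf] with y hy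
    exact (hasFDerivAt_comp_norm_sq hy).fderiv
  -- `innerSL` is conjugate-linear in its first argument; the ascription makes it `ℝ`-linear.
  let inner₂ : E →L[ℝ] E →L[ℝ] ℝ := innerSL ℝ
  have inner₂_apply (u : E) : inner₂ u w = ⟪u, w⟫_ℝ := rfl
  have hasFDerivAt_fderiv :
      HasFDerivAt (fun y : E ↦ ((2 : ℝ) • innerSL ℝ y).smulRight (f' (‖y‖ ^ 2))) _ x :=
    (ContinuousLinearMap.smulRightL ℝ E F).hasFDerivAt_of_bilinear
      ((2 : ℝ) • inner₂).hasFDerivAt (hasFDerivAt_comp_norm_sq hf')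
  rw [iteratedFDeriv_two_apply, fderiv_eventuallyEq.fderiv_eq, hasFDerivAt_fderiv.fderiv]
  simp only [map_smul, smul_apply, add_apply, smul_eq_mul, smul_smul, Matrix.cons_val_zero,
    Matrix.cons_val_one, ContinuousLinearMap.precompR_apply, ContinuousLinearMap.precompL_apply,
    ContinuousLinearMap.compL_apply, ContinuousLinearMap.comp_apply,
    ContinuousLinearMap.smulRight_apply, ContinuousLinearMap.smulRightL_apply_apply,
    coe_innerSL_apply, inner₂_apply]
  ring_nf

lemma contDiff_norm_pow_of_even {k : ℕ∞ω} {m : ℕ} (hm : Even m) :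
    ContDiff ℝ k fun x : E ↦ ‖x‖ ^ m := by
  obtain ⟨r, rfl⟩ := hm
  simpa only [← two_mul, pow_mul] using (contDiff_norm_sq ℝ (E := E)).pow r

variable [FiniteDimensional ℝ E]

lemma laplacian_comp_norm_sq {f f' : ℝ → F} {f'' : F} {x : E}
    (hf : ∀ᶠ s in 𝓝 (‖x‖ ^ 2), HasDerivAt f (f' s) s) (hf' : HasDerivAt f' f'' (‖x‖ ^ 2)) :
    Δ (fun y : E ↦ f (‖y‖ ^ 2)) x =
      (4 * ‖x‖ ^ 2) • f'' + (2 * finrank ℝ E : ℝ) • f' (‖x‖ ^ 2) := by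
  let b := stdOrthonormalBasis ℝ E
  calc Δ (fun y : E ↦ f (‖y‖ ^ 2)) x
      = ∑ i, ((4 * ⟪x, b i⟫_ℝ ^ 2) • f'' + (2 : ℝ) • f' (‖x‖ ^ 2)) := by
        simp [laplacian_eq_iteratedFDeriv_orthonormalBasis _ b,
          iteratedFDeriv_two_comp_norm_sq hf hf', mul_assoc, ← sq]
    _ = (4 * ‖x‖ ^ 2) • f'' + (2 * finrank ℝ E : ℝ) • f' (‖x‖ ^ 2) := by
        rw [Finset.sum_add_distrib, ← Finset.sum_smul, ← Finset.mul_sum, b.sum_sq_inner_left]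
        simp [mul_comm (2 : ℝ), mul_smul, Nat.cast_smul_eq_nsmul]

lemma laplacian_norm_pow_four (x : E) :
    Δ (fun y : E ↦ ‖y‖ ^ 4) x = 4 * (finrank ℝ E + 2) * ‖x‖ ^ 2 := by
  have sq_deriv (s : ℝ) : HasDerivAt (fun t : ℝ ↦ t ^ 2) (2 * s) s := by
    simpa using hasDerivAt_pow 2 s
  have two_mul_deriv : HasDerivAt (fun t : ℝ ↦ 2 * t) 2 (‖x‖ ^ 2) := by
    simpa using (hasDerivAt_id (‖x‖ ^ 2)).const_mul 2
  have radial := laplacian_comp_norm_sq (.of_forall sq_deriv) two_mul_deriv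
  simp only [← pow_mul, smul_eq_mul] at radial
  rw [radial]
  ring

lemma laplacian_inv_add_norm_sq {d : ℝ} {x : E} (hx : d + ‖x‖ ^ 2 ≠ 0) :
    Δ (fun y : E ↦ (d + ‖y‖ ^ 2)⁻¹) x =
      (8 * ‖x‖ ^ 2 - 2 * finrank ℝ E * (d + ‖x‖ ^ 2)) / (d + ‖x‖ ^ 2) ^ 3 := by
  have inv_deriv : ∀ᶠ s in 𝓝 (‖x‖ ^ 2),
      HasDerivAt (fun t : ℝ ↦ (d + t)⁻¹) (-((d + s) ^ 2)⁻¹) s := by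
    filter_upwards [(continuous_const.add continuous_id).continuousAt.eventually_ne hx] with s hs
    simpa using (hasDerivAt_inv hs).comp_const_add d s
  have inv_sq_deriv :
      HasDerivAt (fun s : ℝ ↦ -((d + s) ^ 2)⁻¹) (2 / (d + ‖x‖ ^ 2) ^ 3) (‖x‖ ^ 2) := by
    refine ((((hasDerivAt_id _).const_add d).pow 2).inv (pow_ne_zero 2 hx)).neg.congr_deriv ?_
    simp only [Nat.cast_ofNat, id_eq, Nat.add_one_sub_one, pow_one, mul_one, Pi.pow_apply]
    field_simp
  rw [laplacian_comp_norm_sq inv_deriv inv_sq_deriv]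
  simp only [smul_eq_mul]
  field_simp
  ring

end RadialFunctions

lemma laplacian_eq_sum_fderiv_fderiv_single {ι F : Type*} [Fintype ι] [DecidableEq ι]
    [NormedAddCommGroup F] [NormedSpace ℝ F] {f : EuclideanSpace ℝ ι → F}
    {x : EuclideanSpace ℝ ι} (hf : ContDiffAt ℝ 2 f x) :
    Δ f x = ∑ i, fderiv ℝ (fun y ↦ fderiv ℝ f y (EuclideanSpace.single i 1)) x
      (EuclideanSpace.single i 1) := by
  have fderiv_differentiable : DifferentiableAt ℝ (fderiv ℝ f) x :=
    (hf.fderiv_right (m := 1) (by norm_num)).differentiableAt (by norm_num)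
  simp [laplacian_eq_iteratedFDeriv_orthonormalBasis f (EuclideanSpace.basisFun ι ℝ),
    iteratedFDeriv_two_apply, fderiv_clm_apply fderiv_differentiable]

section Perturbation

variable {E : Type*} [NormedAddCommGroup E]

/-- The perturbation added to `φ₀`: a smooth bump of height `d ^ 2` and width of order `√d`, whose
decay makes a cutoff unnecessary. -/
def rationalBump (d : ℝ) (x : E) : ℝ := d ^ 3 / (d + ‖x‖ ^ 2)

lemma abs_rationalBump_le {d : ℝ} (hd : 0 < d) (x : E) : |rationalBump d x| ≤ d ^ 2 :=
  calc |rationalBump d x| = d ^ 3 / (d + ‖x‖ ^ 2) := by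
        rw [rationalBump, abs_of_nonneg (by positivity)]
    _ ≤ d ^ 3 / d := by gcongr; exact le_add_of_nonneg_right (sq_nonneg _)
    _ = d ^ 2 := by field_simp

variable [InnerProductSpace ℝ E]

lemma contDiff_rationalBump {k : ℕ∞ω} {d : ℝ} (hd : 0 < d) :
    ContDiff ℝ k (rationalBump d : E → ℝ) :=
  contDiff_const.div (contDiff_const.add (contDiff_norm_sq ℝ)) fun x ↦ by positivity

variable (E) in
/-- The function `φ₀` in dimension `n = finrank ℝ E`, whose Laplacian is `-‖x‖ ^ 2`. -/
def quarticProfile (x : E) : ℝ := 1 - ‖x‖ ^ 4 / (4 * (finrank ℝ E + 2))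

lemma contDiff_quarticProfile {k : ℕ∞ω} : ContDiff ℝ k (quarticProfile E) :=
  contDiff_const.sub ((contDiff_norm_pow_of_even (by decide)).div_const _)

variable [FiniteDimensional ℝ E]

lemma laplacian_quarticProfile (x : E) : Δ (quarticProfile E) x = -‖x‖ ^ 2 := by
  let c : ℝ := (4 * (finrank ℝ E + 2))⁻¹
  have profile_eq : quarticProfile E = (fun _ ↦ 1) - c • fun y : E ↦ ‖y‖ ^ 4 := by
    ext y
    simp [quarticProfile, c, div_eq_inv_mul]
  have norm_pow_four : ContDiffAt ℝ 2 (fun y : E ↦ ‖y‖ ^ 4) x :=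
    (contDiff_norm_pow_of_even (by decide)).contDiffAt
  have scaled_norm_pow_four : ContDiffAt ℝ 2 (c • fun y : E ↦ ‖y‖ ^ 4) x :=
    norm_pow_four.const_smul c
  rw [profile_eq, contDiffAt_const.laplacian_sub scaled_norm_pow_four,
    laplacian_smul c norm_pow_four, laplacian_norm_pow_four, laplacian_const]
  simp only [c, Pi.zero_apply, smul_eq_mul, zero_sub, neg_inj]
  field_simp

lemma laplacian_rationalBump {d : ℝ} (hd : 0 < d) (x : E) :
    Δ (rationalBump d : E → ℝ) x =
      d ^ 3 * ((8 * ‖x‖ ^ 2 - 2 * finrank ℝ E * (d + ‖x‖ ^ 2)) / (d + ‖x‖ ^ 2) ^ 3) := by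
  have denom_ne_zero (y : E) : d + ‖y‖ ^ 2 ≠ 0 := by positivity
  have inv_contDiff : ContDiff ℝ 2 fun y : E ↦ (d + ‖y‖ ^ 2)⁻¹ :=
    (contDiff_const.add (contDiff_norm_sq ℝ)).inv denom_ne_zero
  have bump_eq : rationalBump d = d ^ 3 • fun y : E ↦ (d + ‖y‖ ^ 2)⁻¹ := by
    ext y
    simp [rationalBump, div_eq_mul_inv]
  rw [bump_eq, laplacian_smul _ inv_contDiff.contDiffAt,
    laplacian_inv_add_norm_sq (denom_ne_zero x), smul_eq_mul]

lemma neg_add_cube_mul_div_cube_le {n d s : ℝ} (hn : 1 ≤ n) (hd : 0 < d) (hs : 0 ≤ s) :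
    -s + d ^ 3 * ((8 * s - 2 * n * (d + s)) / (d + s) ^ 3) ≤ -(1 / 8) * d := by
  have numerator_le : 8 * s - 2 * n * (d + s) ≤ 6 * s - 2 * d := by
    nlinarith
  have quartic_le : d ^ 3 * (6 * s - 2 * d) ≤ (s - 1 / 8 * d) * (d + s) ^ 3 := by
    -- The squares are centred near `s = d / 2`, where the two sides are closest.
    have : 0 ≤ s * d * (2 * s - d) ^ 2 := by positivity
    have : 0 ≤ d ^ 2 * (7 * s - 4 * d) ^ 2 := by positivity
    have : 0 ≤ s ^ 4 := by positivity
    have : 0 ≤ s * d ^ 3 := by positivity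
    have : 0 ≤ d ^ 4 := by positivity
    linarith
  have bump_le : d ^ 3 * (8 * s - 2 * n * (d + s)) / (d + s) ^ 3 ≤ s - 1 / 8 * d := by
    rw [div_le_iff₀ (by positivity)]
    exact (mul_le_mul_of_nonneg_left numerator_le (by positivity)).trans quartic_le
  rw [← mul_div_assoc]
  linarith

lemma laplacian_quarticProfile_add_rationalBump_le [Nontrivial E] {d : ℝ} (hd : 0 < d) (x : E) :
    Δ (quarticProfile E + rationalBump d : E → ℝ) x ≤ -(1 / 8) * d := by
  rw [contDiff_quarticProfile.contDiffAt.laplacian_add (contDiff_rationalBump hd).contDiffAt,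
    laplacian_quarticProfile, laplacian_rationalBump hd]
  exact neg_add_cube_mul_div_cube_le (mod_cast finrank_pos) hd (by positivity)

end Perturbation

theorem stmt_16_general {E : Type*} [NormedAddCommGroup E] [InnerProductSpace ℝ E]
    [FiniteDimensional ℝ E] [Nontrivial E] {ε : ℝ} (hε : 0 < ε) :
    ∃ φ : E → ℝ, ContDiff ℝ ∞ φ ∧
      (∀ x, |φ x - (1 - ‖x‖ ^ 4 / (4 * ((finrank ℝ E : ℝ) + 2)))| ≤ ε) ∧
      ∀ x, Δ φ x ≤ -(1 / 8) * √ε := by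
  have sqrt_pos : 0 < √ε := Real.sqrt_pos.2 hε
  refine ⟨quarticProfile E + rationalBump √ε,
    contDiff_quarticProfile.add (contDiff_rationalBump sqrt_pos), fun x ↦ ?_,
    laplacian_quarticProfile_add_rationalBump_le sqrt_pos⟩
  simpa [quarticProfile, Real.sq_sqrt hε.le] using abs_rationalBump_le sqrt_pos x

/-- analytic core of the sharpness example. Let `n ≥ 3` and let
`φ₀(x) = 1 − |x|⁴/(4(n+2))` on the unit ball `B ⊂ ℝⁿ` (so `Δφ₀ = −|x|²`). There exist
`C ≥ 1`, `c > 0`, `ε₀ ∈ (0,1]`, depending only on `n`, such that for every `ε ∈ (0, ε₀]`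
there is a smooth `φ : B → ℝ` with `sup_B |φ − φ₀| ≤ Cε` and `Δφ ≤ −c ε^{1/2}` on `B`,
where `Δ` is the Euclidean Laplacian `Δφ(x) = Σ_i ∂_i∂_i φ(x)`. -/
theorem stmt_16 (n : ℕ) (hn : 3 ≤ n) :
    ∃ C c ε₀ : ℝ, 1 ≤ C ∧ 0 < c ∧ 0 < ε₀ ∧ ε₀ ≤ 1 ∧
    ∀ ε : ℝ, 0 < ε → ε ≤ ε₀ →
      ∃ φ : EuclideanSpace ℝ (Fin n) → ℝ, ContDiff ℝ (⊤ : ℕ∞) φ ∧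
        (∀ x ∈ ball (0 : EuclideanSpace ℝ (Fin n)) 1,
          |φ x - (1 - ‖x‖ ^ 4 / (4 * ((n : ℝ) + 2)))| ≤ C * ε) ∧
        (∀ x ∈ ball (0 : EuclideanSpace ℝ (Fin n)) 1,
          (∑ i, fderiv ℝ (fun y => fderiv ℝ φ y (EuclideanSpace.single i 1)) x
            (EuclideanSpace.single i 1)) ≤ -c * Real.sqrt ε) := by
  have : Nonempty (Fin n) := ⟨⟨0, by lia⟩⟩
  refine ⟨1, 1 / 8, 1, le_rfl, by norm_num, one_pos, le_rfl, fun ε hε _ ↦ ?_⟩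
  obtain ⟨φ, hφ, hclose, hlap⟩ := stmt_16_general (E := EuclideanSpace ℝ (Fin n)) hε
  refine ⟨φ, hφ, fun x _ ↦ by simpa using hclose x, fun x _ ↦ ?_⟩
  exact (laplacian_eq_sum_fderiv_fderiv_single (contDiff_infty.1 hφ 2).contDiffAt).symm.trans_le
    (hlap x)
end
end
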